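/- A matrix Y ∈ M_{2ℓ+1}(ℂ) satisfies Y·W(x) = W(x)·Y for all x ∈ (-1,1) if and only if Y is a complex linear combination of the identity I and the involution J. Moreover J·P_n(x)·J = P_n(x) for every n ∈ ℕ and every x. -/

import Mathlib

open Finset Polynomial MeasureTheory Matrix
open scoped BigOperators ComplexOrder

noncomputable section

/-- q-shifted factorial `(a;p)_n`. -/
def qp (a p : ℂ) (n : ℕ) : ℂ := ∏ j ∈ Finset.range n, (1 - a * p ^ j)

/-- q-Racah polynomial `R_n(μ(x);α,β,γ,δ;p)`. -/
def qRacah (p α β γ δ : ℂ) (n x : ℕ) : ℂ :=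
  ∑ k ∈ Finset.range (min n x + 1),
    qp (p ^ (-(n : ℤ))) p k * qp (α * β * p ^ (n + 1)) p k *
        qp (p ^ (-(x : ℤ))) p k * qp (γ * δ * p ^ (x + 1)) p k /
      (qp (α * p) p k * qp (β * δ * p) p k * qp (γ * p) p k * qp p p k) * p ^ k

/-- `IsUltra C` says that for each base `p`, parameter `β` and degree `n`, `C p β n` is
the continuous q-ultraspherical polynomial: it has degree at most `n` and its values at
`(z+z⁻¹)/2` are given by the symmetric Laurent sum. -/
def IsUltra (C : ℂ → ℂ → ℕ → Polynomial ℂ) : Prop :=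
  ∀ (p β : ℂ) (n : ℕ),
    (C p β n).degree ≤ (n : ℕ) ∧
      ∀ z : ℂ, z ≠ 0 →
        (C p β n).eval ((z + z⁻¹) / 2) =
          ∑ r ∈ Finset.range (n + 1),
            qp β p r * qp β p (n - r) / (qp p p r * qp p p (n - r)) * z ^ ((n : ℤ) - 2 * r)

/-- The matrix-valued polynomial `P_n` (entries in `Polynomial ℂ`); here `L = 2ℓ`. -/
def Pm (q : ℂ) (L : ℕ) (C : ℂ → ℂ → ℕ → Polynomial ℂ) (n : ℕ) :
    Matrix (Fin (L + 1)) (Fin (L + 1)) (Polynomial ℂ) :=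
  Matrix.of fun i j =>
    ∑ k ∈ Finset.Icc (i : ℕ) (min L (n + (j : ℕ))),
      Polynomial.C
          ((-1 : ℂ) ^ k *
            q ^ ((n : ℤ) + (2 * (k : ℤ) + 1) * ((k : ℤ) - ((i : ℕ) : ℤ)) +
                ((j : ℕ) : ℤ) * (2 * (k : ℤ) + 1) + 2 * (k : ℤ) * ((L : ℤ) + (n : ℤ) + 1) -
                (k : ℤ) ^ 2) *
            (qp (q ^ 2) (q ^ 2) k * qp (q ^ 2) (q ^ 2) (k + (i : ℕ)) /
              (qp (q ^ 2) (q ^ 2) (2 * k) * qp (q ^ 2) (q ^ 2) (i : ℕ))) *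
            (qp (q ^ (-(2 * (L : ℤ)))) (q ^ 2) k *
                qp (q ^ (-(2 * ((j : ℕ) : ℤ) + 2 * (n : ℤ)))) (q ^ 2) k /
              (qp (q ^ 2) (q ^ 2) k * qp (q ^ (2 * (L : ℤ) + 4)) (q ^ 2) k)) *
            (qp (q ^ 2) (q ^ 2) (n + (j : ℕ) - k) /
              qp (q ^ (4 * (k : ℤ) + 4)) (q ^ 2) (n + (j : ℕ) - k)) *
            qRacah (q ^ 2) 1 1 (q ^ (-(2 * (n : ℤ) + 2 * ((j : ℕ) : ℤ) + 2)))
              (q ^ (-(2 * (L : ℤ) + 2))) k (j : ℕ)) *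
        (C (q ^ 2) (q ^ (-(2 * (k : ℤ)))) (k - (i : ℕ)) *
          C (q ^ 2) (q ^ (2 * (k : ℤ) + 2)) (n + (j : ℕ) - k))

/-- Evaluation of the matrix-valued polynomial `P_n` at a point. -/
def evP (q : ℂ) (L : ℕ) (C : ℂ → ℂ → ℕ → Polynomial ℂ) (n : ℕ) (x : ℂ) :
    Matrix (Fin (L + 1)) (Fin (L + 1)) ℂ :=
  (Pm q L C n).map (Polynomial.eval x)

/-- The coefficients `α_t(m,n)` of the weight. -/
def alphaC (q : ℂ) (L m n t : ℕ) : ℂ :=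
  q ^ (2 * (n : ℤ) * ((L : ℤ) + 1) - (n : ℤ) ^ 2 - (2 * (L : ℤ) + 3) * (t : ℤ) + (t : ℤ) ^ 2 -
      (L : ℤ) + (m : ℤ)) *
    ((1 - q ^ (2 * (L : ℤ) + 2)) / (1 - q ^ (2 * (m : ℤ) + 2))) *
    (qp (q ^ 2) (q ^ 2) (L - n) * qp (q ^ 2) (q ^ 2) n / qp (q ^ 2) (q ^ 2) L) *
    ((-1 : ℂ) ^ ((m : ℤ) - (t : ℤ)) * qp (q ^ (2 * (m : ℤ) - 2 * (L : ℤ))) (q ^ 2) (n - t) /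
      qp (q ^ (2 * (m : ℤ) + 4)) (q ^ 2) (n - t)) *
    (qp (q ^ (2 * (L : ℤ) + 4 - 2 * (t : ℤ))) (q ^ 2) t / qp (q ^ 2) (q ^ 2) t)

/-- The matrix weight `W(x)`. -/
def Wm (q : ℂ) (L : ℕ) (x : ℂ) : Matrix (Fin (L + 1)) (Fin (L + 1)) ℂ :=
  Matrix.of fun i j =>
    ∑ t ∈ Finset.range (max (i : ℕ) (j : ℕ) + 1),
      alphaC q L (min (i : ℕ) (j : ℕ)) (max (i : ℕ) (j : ℕ)) t *
        (Polynomial.Chebyshev.U ℂ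
            ((min (i : ℕ) (j : ℕ) : ℤ) + (max (i : ℕ) (j : ℕ) : ℤ) - 2 * (t : ℤ))).eval x

/-- The antidiagonal involution `J`. -/
def Jm (L : ℕ) : Matrix (Fin (L + 1)) (Fin (L + 1)) ℂ :=
  Matrix.of fun i j => if (i : ℕ) + (j : ℕ) = L then 1 else 0

/-- The diagonal leading-coefficient matrix `Γ_n`. -/
def Gam (q : ℂ) (L n : ℕ) : Matrix (Fin (L + 1)) (Fin (L + 1)) ℂ :=
  Matrix.diagonal fun i =>
    2 ^ n * q ^ n * qp (q ^ (2 * ((i : ℕ) : ℤ) + 2)) (q ^ 2) n *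
        qp (q ^ (2 * (L : ℤ) - 2 * ((i : ℕ) : ℤ) + 2)) (q ^ 2) n /
      (qp (q ^ 2) (q ^ 2) n * qp (q ^ (2 * (L : ℤ) + 4)) (q ^ 2) n)

/-- The squared-norm matrix `G_m`. -/
def Gmat (q : ℂ) (L m : ℕ) : Matrix (Fin (L + 1)) (Fin (L + 1)) ℂ :=
  Matrix.diagonal fun i =>
    q ^ (2 * (m : ℤ) - (L : ℤ)) * (1 - q ^ (2 * (L : ℤ) + 2)) ^ 2 /
      ((1 - q ^ (2 * (m : ℤ) + 2 * ((i : ℕ) : ℤ) + 2)) *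
        (1 - q ^ (2 * (L : ℤ) - 2 * ((i : ℕ) : ℤ) + 2 * (m : ℤ) + 2)))

/-- The unipotent lower triangular matrix `L(x)` of the LDU decomposition. -/
def Lm (q : ℂ) (L : ℕ) (C : ℂ → ℂ → ℕ → Polynomial ℂ) (x : ℂ) :
    Matrix (Fin (L + 1)) (Fin (L + 1)) ℂ :=
  Matrix.of fun m k =>
    if (k : ℕ) ≤ (m : ℕ) then
      q ^ (((m : ℕ) : ℤ) - ((k : ℕ) : ℤ)) * qp (q ^ 2) (q ^ 2) (m : ℕ) *
          qp (q ^ 2) (q ^ 2) (2 * (k : ℕ) + 1) /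
          (qp (q ^ 2) (q ^ 2) ((m : ℕ) + (k : ℕ) + 1) * qp (q ^ 2) (q ^ 2) (k : ℕ)) *
        (C (q ^ 2) (q ^ (2 * (k : ℕ) + 2)) ((m : ℕ) - (k : ℕ))).eval x
    else 0

/-- The claimed inverse of `L(x)`. -/
def Linv (q : ℂ) (L : ℕ) (C : ℂ → ℂ → ℕ → Polynomial ℂ) (x : ℂ) :
    Matrix (Fin (L + 1)) (Fin (L + 1)) ℂ :=
  Matrix.of fun k n =>
    if (n : ℕ) ≤ (k : ℕ) then
      q ^ ((2 * ((k : ℕ) : ℤ) + 1) * (((k : ℕ) : ℤ) - ((n : ℕ) : ℤ))) *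
          qp (q ^ 2) (q ^ 2) (k : ℕ) * qp (q ^ 2) (q ^ 2) ((k : ℕ) + (n : ℕ)) /
          (qp (q ^ 2) (q ^ 2) (2 * (k : ℕ)) * qp (q ^ 2) (q ^ 2) (n : ℕ)) *
        (C (q ^ 2) (q ^ (-(2 * ((k : ℕ) : ℤ)))) ((k : ℕ) - (n : ℕ))).eval x
    else 0

/-- The constants `c_k(ℓ)`. -/
def ckC (q : ℂ) (L k : ℕ) : ℂ :=
  q ^ (-(L : ℤ)) / 4 * (1 - q ^ (4 * k + 2)) * qp (q ^ 2) (q ^ 2) (L + k + 1) *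
      qp (q ^ 2) (q ^ 2) (L - k) * qp (q ^ 2) (q ^ 2) k ^ 4 /
    (qp (q ^ 2) (q ^ 2) (2 * k + 1) ^ 2 * qp (q ^ 2) (q ^ 2) L ^ 2)

/-- The diagonal part `T(x)` of the LDU decomposition. -/
def Tm (q : ℂ) (L : ℕ) (x : ℂ) : Matrix (Fin (L + 1)) (Fin (L + 1)) ℂ :=
  Matrix.diagonal fun k =>
    ckC q L (k : ℕ) *
      (4 * ∏ j ∈ Finset.Icc 1 (k : ℕ), (1 - 2 * (2 * x ^ 2 - 1) * q ^ (2 * j) + q ^ (4 * j)))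

/-- The coefficient matrix `M₁(z)` of the q-difference operator `D₁`. -/
def M1f (q : ℂ) (L : ℕ) (z : ℂ) : Matrix (Fin (L + 1)) (Fin (L + 1)) ℂ :=
  Matrix.of fun i j =>
    if (j : ℕ) = (i : ℕ) + 1 then
      -(q ^ (1 - ((i : ℕ) : ℤ)) * (1 - q ^ (2 * (i : ℕ) + 2)) / (1 - q ^ 2) ^ 2 *
        (z / (1 - z ^ 2)))
    else if (j : ℕ) = (i : ℕ) then
      q ^ (1 - ((i : ℕ) : ℤ)) / (1 - q ^ 2) ^ 2 *
        ((1 - q ^ (2 * (i : ℕ) + 2) * z ^ 2) / (1 - z ^ 2))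
    else 0

/-- `M₂(z) = J M₁(z) J`. -/
def M2f (q : ℂ) (L : ℕ) (z : ℂ) : Matrix (Fin (L + 1)) (Fin (L + 1)) ℂ :=
  Jm L * M1f q L z * Jm L

/-- The eigenvalue matrix `Λ_n(1)`. -/
def Lam1 (q : ℂ) (L n : ℕ) : Matrix (Fin (L + 1)) (Fin (L + 1)) ℂ :=
  Matrix.diagonal fun j =>
    (q ^ (-((j : ℕ) : ℤ) - (n : ℤ) - 1) + q ^ (((j : ℕ) : ℤ) + (n : ℤ) + 1)) / (q⁻¹ - q) ^ 2

/-- The eigenvalue matrix `Λ_n(2) = J Λ_n(1) J`. -/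
def Lam2 (q : ℂ) (L n : ℕ) : Matrix (Fin (L + 1)) (Fin (L + 1)) ℂ :=
  Jm L * Lam1 q L n * Jm L

/-- The diagonal coefficient matrix `K₁(z)` of the decoupled operator. -/
def K1f (q : ℂ) (L : ℕ) (z : ℂ) : Matrix (Fin (L + 1)) (Fin (L + 1)) ℂ :=
  Matrix.diagonal fun i =>
    q ^ (1 - ((i : ℕ) : ℤ)) / (1 - q ^ 2) ^ 2 *
      ((1 - q ^ (2 * (i : ℕ) + 2) * z ^ 2) / (1 - z ^ 2))

/-- The symmetric Laurent polynomial `Ĉ_k(z;β|p)`. -/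
def Chat (p β : ℂ) (k : ℕ) (z : ℂ) : ℂ :=
  ∑ r ∈ Finset.range (k + 1),
    qp β p r * qp β p (k - r) / (qp p p r * qp p p (k - r)) * z ^ ((k : ℤ) - 2 * (r : ℤ))

/-- The matrix polynomials `R_n(x) = L(x)ᵀ P_n(x) Γ_n⁻¹`. -/
def Rmat (q : ℂ) (L : ℕ) (C : ℂ → ℂ → ℕ → Polynomial ℂ) (n : ℕ) (x : ℂ) :
    Matrix (Fin (L + 1)) (Fin (L + 1)) ℂ :=
  (Lm q L C x)ᵀ * evP q L C n x * (Gam q L n)⁻¹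


namespace QX

def E (p a : ℂ) (s : ℕ) : ℂ := ∏ i ∈ Finset.range s, (p ^ i - a)

lemma E_zero (p a : ℂ) : E p a 0 = 1 := by simp [E]
lemma E_succ (p a : ℂ) (s : ℕ) : E p a (s+1) = E p a s * (p ^ s - a) := by
  simp [E, Finset.prod_range_succ]
lemma E_shift (p a : ℂ) (s : ℕ) :
    E p (p*a) s * (p^s - p*a) = p^s * (1 - p*a) * E p a s := by
  induction s with
  | zero => simp [E]
  | succ s ih =>
    rw [E_succ, E_succ, ih]; ring
lemma E_shift' (p a : ℂ) (s : ℕ) :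
    E p (p*a) (s+1) = p^s * (1 - p*a) * E p a s := by
  rw [E_succ, E_shift]

lemma qp_zero (a p : ℂ) : qp a p 0 = 1 := by simp [qp]
lemma qp_succ (a p : ℂ) (n : ℕ) : qp a p (n+1) = qp a p n * (1 - a * p ^ n) := by
  simp [qp, Finset.prod_range_succ]

lemma one_sub_ne {p : ℂ} (hp : ∀ n : ℕ, 0 < n → p ^ n ≠ 1) (n : ℕ) : 1 - p ^ (n+1) ≠ 0 :=
  sub_ne_zero.mpr (Ne.symm (hp _ (Nat.succ_pos _)))

lemma pow_sub_ne {p : ℂ} (hp0 : p ≠ 0) (hp : ∀ n : ℕ, 0 < n → p ^ n ≠ 1) {i N : ℕ} (h : i < N) :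
    p ^ i - p ^ N ≠ 0 := by
  obtain ⟨d, rfl⟩ := Nat.exists_eq_add_of_lt h
  have : p ^ i - p ^ (i + d + 1) = p ^ i * (1 - p ^ (d+1)) := by ring
  rw [this]
  exact mul_ne_zero (pow_ne_zero _ hp0) (one_sub_ne hp d)

lemma fa_ne {p : ℂ} (hp : ∀ n : ℕ, 0 < n → p ^ n ≠ 1) (n : ℕ) : qp p p n ≠ 0 := by
  unfold qp
  refine Finset.prod_ne_zero_iff.mpr fun j _ => ?_
  have := one_sub_ne hp j
  rwa [pow_succ'] at this

lemma E_ne {p : ℂ} (hp0 : p ≠ 0) (hp : ∀ n : ℕ, 0 < n → p ^ n ≠ 1) {N s : ℕ} (h : s ≤ N) :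
    E p (p ^ N) s ≠ 0 := by
  unfold E
  refine Finset.prod_ne_zero_iff.mpr fun j hj => ?_
  exact pow_sub_ne hp0 hp (by simp at hj; omega)

lemma E_van (p : ℂ) {N s : ℕ} (h : N < s) : E p (p ^ N) s = 0 := by
  unfold E
  exact Finset.prod_eq_zero (Finset.mem_range.mpr h) (sub_self _)

def phi (p : ℂ) (k s : ℕ) : ℂ :=
  qp (p ^ (-(k:ℤ))) p s * qp (p ^ (k+1)) p s / (qp p p s) ^ 2

lemma phi_zero (p : ℂ) (k : ℕ) : phi p k 0 = 1 := by simp [phi, qp_zero]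

lemma phi_succ {p : ℂ} (hp : ∀ n : ℕ, 0 < n → p ^ n ≠ 1) (k s : ℕ) :
    phi p k (s+1) * (1 - p^(s+1))^2
      = phi p k s * ((1 - p ^ (-(k:ℤ)) * p ^ s) * (1 - p^(k+1) * p ^ s)) := by
  unfold phi
  rw [qp_succ, qp_succ, qp_succ]
  have h1 := fa_ne hp s
  have h2 := one_sub_ne hp s
  have h3 : 1 - p * p ^ s ≠ 0 := by rwa [pow_succ'] at h2
  rw [pow_succ' p s]
  clear h2
  generalize 1 - p * p ^ s = U at h3 ⊢
  generalize p ^ (k+1) = pk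
  generalize p ^ (-(k:ℤ)) = pk'
  field_simp

/-- generic sum -/
def Fg (p M : ℂ) (k : ℕ) (a b c : ℂ) : ℂ :=
  ∑ s ∈ Finset.range (k+1), phi p k s * (E p a s * E p b s / (E p c s * E p M s))

def F (p : ℂ) (L k n j : ℕ) : ℂ := Fg p (p^L) k (p^j) (p^(n+L+1)) (p^(n+j))

/-- Relation 2, generic -/
lemma rel2g {p : ℂ} (hp0 : p ≠ 0) (k : ℕ) (a ν D : ℂ)
    (hc : ∀ s ≤ k, E p (ν*a) s ≠ 0) (hc' : ∀ s ≤ k, E p (p⁻¹*(ν*a)) s ≠ 0)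
    (hc1 : ∀ s ≤ k, p ^ s - ν * a ≠ 0) :
    (1 - ν*a) * (1 - p*D*ν) * Fg p (D*a) k a (p*ν*D*a) (ν*a)
      = (1-ν) * (1 - p*ν*D*a) * Fg p (D*a) k a (p⁻¹*(p*ν*D*a)) (p⁻¹*(ν*a))
        + ν * (1-p*D) * (1-a) * Fg p (D*a) k (p⁻¹*a) (p*ν*D*a) (p⁻¹*(ν*a)) := by
  unfold Fg
  rw [Finset.mul_sum, Finset.mul_sum, Finset.mul_sum, ← Finset.sum_add_distrib]
  refine Finset.sum_congr rfl fun s hs => ?_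
  have hs' : s ≤ k := by simp at hs; omega
  have e1 := E_shift p (p⁻¹*a) s
  have e2 := E_shift p (p⁻¹*(p*ν*D*a)) s
  have e3 := E_shift p (p⁻¹*(ν*a)) s
  rw [mul_inv_cancel_left₀ hp0] at e1 e2 e3
  have c1 := hc s hs'
  have c2 := hc' s hs'
  have c3 := hc1 s hs'
  have ps : p ^ s ≠ 0 := pow_ne_zero _ hp0
  generalize E p a s = Ea at *
  generalize E p (p⁻¹*a) s = Ea' at *
  generalize E p (p*ν*D*a) s = Eb at *
  generalize E p (p⁻¹*(p*ν*D*a)) s = Eb' at *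
  generalize E p (ν*a) s = Ec at *
  generalize E p (p⁻¹*(ν*a)) s = Ec' at *
  generalize phi p k s = φ at *
  generalize E p (D*a) s = EM at *
  have key : (1 - ν*a) * (1 - p*D*ν) * (Ea * Eb) * Ec'
      = ((1-ν) * (1 - p*ν*D*a) * (Ea * Eb') + ν * (1-p*D) * (1-a) * (Ea' * Eb)) * Ec := by
    have : p ^ s * ((1 - ν*a) * (1 - p*D*ν) * (Ea * Eb) * Ec')
      = p ^ s * (((1-ν) * (1 - p*ν*D*a) * (Ea * Eb') + ν * (1-p*D) * (1-a) * (Ea' * Eb)) * Ec) := by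
      linear_combination (- (1 - p*D*ν) * (Ea * Eb)) * e3 + (1-ν)*Ea*Ec*e2 + ν*(1-p*D)*Eb*Ec*e1
    exact mul_left_cancel₀ ps this
  have k2 : (1 - ν*a) * (1 - p*D*ν) * (Ea * Eb / Ec)
      = (1-ν) * (1 - p*ν*D*a) * (Ea * Eb' / Ec') + ν * (1-p*D) * (1-a) * (Ea' * Eb/ Ec') := by
    field_simp
    linear_combination key
  simp only [← div_div]
  linear_combination (φ / EM) * k2

lemma rel1_alg (p a ν D T : ℂ) :
    (1-p*ν)*(1-p*(p*ν*D*a))^2*(T-a)*T + p*ν*(1-p*a)^2*(1-D)*T*(T-(p*ν*D*a))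
     = (1-p^3*T*(ν*a))*(1-p*D*ν)*(T-a)*(T-(p*ν*D*a))
       + p*(ν*a)*(1-p*D*ν)*(1-p*T)^2*(T-D*a) := by ring

/-- Relation 1 -/
lemma rel1g {p : ℂ} (hp0 : p ≠ 0) (hp : ∀ n : ℕ, 0 < n → p ^ n ≠ 1) (k : ℕ) (a ν D : ℂ)
    (hM : ∀ s ≤ k, E p (D*a) s ≠ 0)
    (hc : ∀ s ≤ k, E p a s ≠ 0 → E p (ν*a) s ≠ 0) (hc' : ∀ s ≤ k, E p (p*(ν*a)) s ≠ 0)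
    (hc1 : 1 - p * (ν*a) ≠ 0) :
    (1 - p*(ν*a) * p^(-(k:ℤ))) * (1 - p^(k+2)*(ν*a)) * (1 - p*D*ν) * Fg p (D*a) k a (p*ν*D*a) (ν*a)
      = (1 - p*(ν*a)) * ((1-p*ν) * (1 - p*(p*ν*D*a)) * Fg p (D*a) k a (p*(p*ν*D*a)) (p*(ν*a))
        + p*ν * (1-p*a) * (1-D) * Fg p (D*a) k (p*a) (p*ν*D*a) (p*(ν*a))) := by
  set b := p*ν*D*a with hb
  set c := ν*a with hcdef
  set X : ℕ → ℂ := fun s => (1-p*c)*(1-p^(s+2)*c)*(1-p*D*ν)*phi p k s/E p (D*a) s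
    * (E p a s * E p b s / E p (p*c) s) with hX
  set Y : ℕ → ℂ := fun s => p*c*(1-p*D*ν)*(1-p^s*p^(-(k:ℤ)))*(1-p^s*p^(k+1))*phi p k s/E p (D*a) s
    * (E p a s * E p b s / (p^s*E p c s)) with hY
  have hL : (1 - p*c * p^(-(k:ℤ))) * (1 - p^(k+2)*c) * (1 - p*D*ν) * Fg p (D*a) k a b c
      = ∑ s ∈ Finset.range (k+1), (X s + Y s) := by
    unfold Fg
    rw [Finset.mul_sum]
    refine Finset.sum_congr rfl fun s hs => ?_
    have hs' : s ≤ k := by simp at hs; omega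
    by_cases h0 : E p a s = 0
    · simp [hX, hY, h0]
    have c1 := hc s hs' h0
    have c2 := hc' s hs'
    have cM := hM s hs'
    have ps : p ^ s ≠ 0 := pow_ne_zero _ hp0
    have e3 := E_shift p c s
    have hX' : X s = (1 - p*c*(p^s)⁻¹)*(1-p^(s+2)*c)*(1-p*D*ν)*phi p k s/E p (D*a) s
        * (E p a s * E p b s / E p c s) := by
      simp only [hX]
      have : (1-p*c) / E p (p*c) s = (1 - p*c*(p^s)⁻¹) / E p c s := by
        field_simp
        linear_combination -e3
      linear_combination ((1-p^(s+2)*c)*(1-p*D*ν)*phi p k s/E p (D*a) s * (E p a s * E p b s)) * this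
    rw [hX']
    simp only [hY]
    have hpk : p ^ k ≠ 0 := pow_ne_zero _ hp0
    rw [_root_.zpow_neg, zpow_natCast]
    field_simp
    ring
  have hYs : ∀ s, s < k → Y s = (1-p*c) * (p*c*(1-p*D*ν)*phi p k (s+1)*(1-p^(s+1))^2 * (p^s - D*a)/E p (D*a) (s+1)
    * (E p a s * E p b s / E p (p*c) (s+1))) := by
    intro s hs
    by_cases h0 : E p a s = 0
    · simp [hY, h0]
    have c1 := hc s hs.le h0
    have cM := hM (s+1) hs
    have hph := phi_succ hp k s
    have : p*c*(1-p*D*ν)*phi p k (s+1)*(1-p^(s+1))^2 = 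
      p*c*(1-p*D*ν)*(phi p k s * ((1 - p ^ (-(k:ℤ)) * p ^ s) * (1 - p^(k+1) * p ^ s))) := by
      rw [← hph]; ring
    rw [this, E_shift']
    rw [E_succ] at cM ⊢
    have cM1 := left_ne_zero_of_mul cM
    have cM2 := right_ne_zero_of_mul cM
    have ps : p ^ s ≠ 0 := pow_ne_zero _ hp0
    simp only [hY]
    field_simp
  have hYk : Y k = 0 := by
    have : (1-p^k*p^(-(k:ℤ))) = 0 := by
      rw [_root_.zpow_neg, zpow_natCast, mul_inv_cancel₀ (pow_ne_zero _ hp0), sub_self]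
    simp only [hY, this]; simp
  rw [hL, Finset.sum_add_distrib, Finset.sum_range_succ (f := Y), hYk, add_zero,
    Finset.sum_range_succ' (f := X)]
  unfold Fg
  rw [Finset.mul_sum, Finset.mul_sum, ← Finset.sum_add_distrib, Finset.sum_range_succ', add_right_comm,
    ← Finset.sum_add_distrib, mul_add, Finset.mul_sum]
  congr 1
  · refine Finset.sum_congr rfl fun s hs => ?_
    have hs' : s < k := by simpa using hs
    rw [hYs s hs']
    simp only [hX]
    have cM := hM (s+1) hs'
    have cc := hc' (s+1) hs'
    have alg := rel1_alg p a ν D (p^s)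
    rw [← hb, ← hcdef] at alg
    rw [E_succ p a, E_succ p b, E_shift' p a, E_shift' p b]
    generalize E p a s = Ea at *
    generalize E p b s = Eb at *
    generalize phi p k (s+1) = φ at *
    generalize E p (D*a) (s+1) = EM at *
    generalize E p (p*c) (s+1) = Ec at *
    field_simp
    linear_combination (-Eb) * alg
  · simp only [hX, E_zero, phi_zero, hcdef, hb]
    ring

end QX

namespace QX

lemma rel1 {p : ℂ} (hp0 : p ≠ 0) (hp : ∀ n : ℕ, 0 < n → p ^ n ≠ 1) {L k n j : ℕ}
    (hj : j ≤ L) (hk : k ≤ L) (hkn : k ≤ n + j + 1) :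
    (1 - p^(n+j+1) * p^(-(k:ℤ))) * (1 - p^(n+j+k+2)) * (1 - p^(L-j+n+1)) * F p L k n j
      = (1 - p^(n+j+1)) * ((1-p^(n+1)) * (1 - p^(n+L+2)) * F p L k (n+1) j
        + p^(n+1) * (1-p^(j+1)) * (1-p^(L-j)) * F p L k n (j+1)) := by
  have hD : p^(L-j) * p^j = p^L := by rw [← pow_add]; congr 1; omega
  have h := rel1g hp0 hp k (p^j) (p^n) (p^(L-j))
    (fun s hs => by rw [hD]; exact E_ne hp0 hp (hs.trans hk))
    (fun s hs h0 => by
      rw [← pow_add]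
      apply E_ne hp0 hp
      by_contra hlt
      exact h0 (E_van p (by omega)))
    (fun s hs => by rw [← pow_add, ← pow_succ']; exact E_ne hp0 hp (by omega))
    (by rw [← pow_add, ← pow_succ']; exact one_sub_ne hp _)
  have hb : p * p^n * p^(L-j) * p^j = p^(n+L+1) := by
    rw [mul_assoc, hD]; ring
  rw [hb, hD] at h
  unfold F
  have e1 : p * p ^ (n+L+1) = p^(n+1+L+1) := by ring
  have e2 : p * (p^n*p^j) = p^(n+1+j) := by ring
  have e3 : p * p^j = p^(j+1) := by ring
  have e4 : p^n*p^j = p^(n+j) := by ring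
  have e5 : p * p^n = p^(n+1) := by ring
  rw [e1, e2, e3, e4, e5] at h
  convert h using 1
  · ring
  · ring

lemma rel2 {p : ℂ} (hp0 : p ≠ 0) (hp : ∀ n : ℕ, 0 < n → p ^ n ≠ 1) {L k n j : ℕ}
    (hj : j ≤ L) (hkn : k + 1 ≤ n + j) :
    (1 - p^(n+j)) * (1 - p^(L-j+n+1)) * F p L k n j
      = (1-p^n) * (1 - p^(n+L+1)) * F p L k (n-1) j
        + p^n * (1-p^(L-j+1)) * (1-p^j) * F p L k n (j-1) := by
  have hD : p^(L-j) * p^j = p^L := by rw [← pow_add]; congr 1; omega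
  have hpred : p⁻¹ * (p^n*p^j) = p^(n+j-1) := by
    obtain ⟨d, hd⟩ : ∃ d, n + j = d+1 := ⟨n+j-1, by omega⟩
    rw [← pow_add, hd, pow_succ', inv_mul_cancel_left₀ hp0]; rfl
  have h := rel2g hp0 k (p^j) (p^n) (p^(L-j))
    (fun s hs => by rw [← pow_add]; exact E_ne hp0 hp (by omega))
    (fun s hs => by rw [hpred]; exact E_ne hp0 hp (by omega))
    (fun s hs => by rw [← pow_add]; exact pow_sub_ne hp0 hp (by omega))
  have hb : p * p^n * p^(L-j) * p^j = p^(n+L+1) := by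
    rw [mul_assoc, hD]; ring
  rw [hb, hD, hpred] at h
  have g1 : (1-p^n) * (1 - p^(n+L+1)) * F p L k (n-1) j = 
    (1-p^n) * (1 - p^(n+L+1)) * Fg p (p^L) k (p^j) (p⁻¹ * p^(n+L+1)) (p^(n+j-1)) := by
    rcases n with _ | n
    · simp
    · unfold F
      congr 2
      · rw [show n+1+L+1 = (n+L+1)+1 by ring, pow_succ' p (n+L+1), inv_mul_cancel_left₀ hp0]; rfl
      · congr 1; omega
  have g2 : p^n * (1-p^(L-j+1)) * (1-p^j) * F p L k n (j-1) =
    p^n * (1-p^(L-j+1)) * (1-p^j) * Fg p (p^L) k (p⁻¹ * p^j) (p^(n+L+1)) (p^(n+j-1)) := by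
    rcases j with _ | j
    · simp
    · unfold F
      congr 2
      rw [pow_succ' p j, inv_mul_cancel_left₀ hp0]; rfl
  rw [g1, g2]
  have e4 : p^n*p^j = p^(n+j) := by ring
  rw [e4] at h
  unfold F
  convert h using 1
  · ring
  · ring

lemma qp_shift1 (a p : ℂ) (s : ℕ) : qp (a*p) p s * (1 - a) = qp a p s * (1 - a * p ^ s) := by
  induction s with
  | zero => simp [qp_zero]
  | succ s ih =>
    rw [qp_succ, qp_succ]
    linear_combination (1 - a*p*p^s) * ih

lemma qp_van {p : ℂ} (hp0 : p ≠ 0) {k s : ℕ} (h : k < s) : qp (p ^ (-(k:ℤ))) p s = 0 := by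
  unfold qp
  refine Finset.prod_eq_zero (Finset.mem_range.mpr h) ?_
  rw [_root_.zpow_neg, zpow_natCast, inv_mul_cancel₀ (pow_ne_zero _ hp0), sub_self]

lemma phi_van {p : ℂ} (hp0 : p ≠ 0) {k s : ℕ} (h : k < s) : phi p k s = 0 := by
  unfold phi; rw [qp_van hp0 h]; simp

def Sk (p b : ℂ) (k : ℕ) : ℂ := ∑ s ∈ Finset.range (k+1), phi p k s * (p^s*(1-b)/(p^s-b))

lemma Sk_succ {p : ℂ} (hp0 : p ≠ 0) (hp : ∀ n : ℕ, 0 < n → p ^ n ≠ 1) (b : ℂ) (k : ℕ)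
    (hb : ∀ s ≤ k+1, p^s - b ≠ 0) :
    (b - p^(k+1)) * Sk p b (k+1) = (1 - b*p^(k+1)) * Sk p b k := by
  set K := p^(k+1) with hK
  have hK0 : K ≠ 0 := pow_ne_zero _ hp0
  have hK1 : 1 - K ≠ 0 := one_sub_ne hp k
  set ψ : ℕ → ℂ := fun s => qp K⁻¹ p s * qp K p s / (qp p p s)^2 with hψ
  have hz : p ^ (-((k+1:ℕ):ℤ)) = K⁻¹ := by rw [_root_.zpow_neg, zpow_natCast]
  have hz' : p ^ (-(k:ℤ)) = K⁻¹ * p := by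
    rw [_root_.zpow_neg, zpow_natCast, hK, pow_succ]; field_simp
  have h1 : ∀ s, phi p (k+1) s * (1-K) = ψ s * (1 - K * p^s) := by
    intro s
    have := qp_shift1 K p s
    simp only [phi, hz, hψ]
    rw [pow_succ p (k+1), ← hK]
    linear_combination qp K⁻¹ p s / (qp p p s)^2 * this
  have h2 : ∀ s, phi p k s * (1-K⁻¹) = ψ s * (1 - K⁻¹ * p^s) := by
    intro s
    have := qp_shift1 K⁻¹ p s
    simp only [phi, hz', hψ]
    rw [← hK]
    linear_combination qp K p s / (qp p p s)^2 * this
  have h2' : ∀ s, phi p k s * (1-K) = ψ s * (p^s - K) := by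
    intro s
    have := h2 s
    field_simp at this
    linear_combination -this
  have h3 : ∀ s, ψ (s+1) * (1-p^(s+1))^2 = ψ s * ((1-K⁻¹*p^s)*(1-K*p^s)) := by
    intro s
    simp only [hψ]
    rw [qp_succ, qp_succ, qp_succ]
    have a1 := fa_ne hp s
    have a2 := one_sub_ne hp s
    rw [pow_succ' p s] at a2 ⊢
    generalize 1 - p * p^s = U at a2 ⊢
    generalize K⁻¹ = K'
    field_simp
  have h4 : ∑ s ∈ Finset.range (k+2), ψ s * p^s = 0 := by
    have tele := Finset.sum_range_sub (fun s => ψ s * (1-p^s)^2) (k+2)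
    have z1 : ψ (k+2) = 0 := by
      simp only [hψ, ← hz]; rw [qp_van hp0 (by omega)]; simp
    simp only [z1, pow_zero, sub_self] at tele
    have : ∀ s, ψ (s+1) * (1-p^(s+1))^2 - ψ s * (1-p^s)^2 = (-(1-K)^2*K⁻¹) * (ψ s * p^s) := by
      intro s; rw [h3]; field_simp; ring
    simp only [this, ← Finset.mul_sum] at tele
    have hne : (-(1-K)^2*K⁻¹) ≠ 0 := by
      apply mul_ne_zero _ (inv_ne_zero hK0)
      exact neg_ne_zero.mpr (pow_ne_zero _ hK1)
    have tele' : (-(1-K)^2*K⁻¹) * ∑ s ∈ Finset.range (k+2), ψ s * p^s = 0 := by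
      rw [tele]; ring
    exact (mul_eq_zero.mp tele').resolve_left hne
  have h5 : Sk p b k = ∑ s ∈ Finset.range (k+2), phi p k s * (p^s*(1-b)/(p^s-b)) := by
    rw [Finset.sum_range_succ, phi_van hp0 (Nat.lt_succ_self k)]; simp [Sk]
  have h6 : (1-K) * ((b - K) * Sk p b (k+1) - (1 - b*K) * Sk p b k) = 0 := by
    rw [h5, Sk, Finset.mul_sum, Finset.mul_sum, ← Finset.sum_sub_distrib, Finset.mul_sum]
    rw [show (0:ℂ) = -(1-b)*(1+K)*(1-K) * ∑ s ∈ Finset.range (k+2), ψ s * p^s by rw [h4]; ring,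
      Finset.mul_sum]
    refine Finset.sum_congr rfl fun s hs => ?_
    have hbs := hb s (by simp at hs; omega)
    have a1 := h1 s
    have a2 := h2' s
    have hQ : p^s*(1-b)/(p^s-b) * (p^s-b) = p^s*(1-b) := div_mul_cancel₀ _ hbs
    generalize p^s*(1-b)/(p^s-b) = Q at hQ ⊢
    clear_value ψ K
    linear_combination Q*(b-K)*a1 - Q*(1-b*K)*a2 - ψ s*(1-K^2)*hQ
  have := (mul_eq_zero.mp h6).resolve_left hK1
  linear_combination this

lemma F_zero {p : ℂ} (hp0 : p ≠ 0) (hp : ∀ n : ℕ, 0 < n → p ^ n ≠ 1) {L k j : ℕ}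
    (hk : k ≤ L) (hj : k ≤ j) : F p L k 0 j = Sk p (p^(L+1)) k := by
  unfold F Fg Sk
  refine Finset.sum_congr rfl fun s hs => ?_
  have hs' : s ≤ k := by simp at hs; omega
  congr 1
  have a1 := E_ne hp0 hp (hs'.trans hj)
  have a2 := E_ne hp0 hp (hs'.trans hk)
  have a3 := pow_sub_ne hp0 hp (show s < L+1 by omega)
  have sh := E_shift p (p^L) s
  rw [← pow_succ'] at sh
  simp only [zero_add]
  field_simp
  linear_combination sh

end QX

namespace QX

lemma exists_z (x : ℂ) : ∃ z : ℂ, z ≠ 0 ∧ x = (z + z⁻¹)/2 := by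
  obtain ⟨w, hw⟩ := IsAlgClosed.exists_pow_nat_eq (x^2-1) (n := 2) (by norm_num)
  have h : (x + w) * (x - w) = 1 := by linear_combination -hw
  have hz : x + w ≠ 0 := left_ne_zero_of_mul_eq_one h
  refine ⟨x + w, hz, ?_⟩
  rw [inv_eq_of_mul_eq_one_right h]; ring

def us (p β z : ℂ) : PowerSeries ℂ := PowerSeries.mk fun r => qp β p r / qp p p r * z ^ r

lemma us_eq {p : ℂ} (hp : ∀ n : ℕ, 0 < n → p ^ n ≠ 1) (β z : ℂ) :
    us p β z - PowerSeries.C z * (PowerSeries.X * us p β z)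
      = PowerSeries.rescale p (us p β z)
        - PowerSeries.C (β * z) * (PowerSeries.X * PowerSeries.rescale p (us p β z)) := by
  ext n
  rcases n with _ | n
  · simp only [map_sub, PowerSeries.coeff_C_mul, PowerSeries.coeff_zero_X_mul, PowerSeries.coeff_rescale, us, PowerSeries.coeff_mk]
    simp [qp_zero]
  · simp only [us, map_sub, PowerSeries.coeff_C_mul, PowerSeries.coeff_succ_X_mul,
      PowerSeries.coeff_mk, PowerSeries.coeff_rescale]
    rw [qp_succ, qp_succ]
    have h1 := fa_ne hp n
    have h2 := one_sub_ne hp n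
    rw [pow_succ' p n] at h2 ⊢
    have h3 : 1 - p * p ^ n = 1 - p * p ^ n := rfl
    have h4 : qp β p n * (1 - β * p^n) / (qp p p n * (1 - p * p^n)) * (1 - p * p^n)
      = qp β p n * (1 - β * p^n) / qp p p n := by
      generalize 1 - p * p^n = U at h2 ⊢
      field_simp
    linear_combination z^(n+1) * h4

lemma ultra_rec {C : ℂ → ℂ → ℕ → Polynomial ℂ} (hC : IsUltra C) {p : ℂ}
    (hp : ∀ n : ℕ, 0 < n → p ^ n ≠ 1) (β x : ℂ) :
    (C p β 0).eval x = 1 ∧ (1 - p) * (C p β 1).eval x = 2 * x * (1-β) * (C p β 0).eval x ∧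
    ∀ n, (1 - p^(n+2)) * (C p β (n+2)).eval x + (1 - β^2 * p^n) * (C p β n).eval x
      = 2 * x * (1-β*p^(n+1)) * (C p β (n+1)).eval x := by
  obtain ⟨z, hz, rfl⟩ := exists_z x
  set H := us p β z⁻¹ * us p β z with hH
  have hco : ∀ n, (C p β n).eval ((z+z⁻¹)/2) = PowerSeries.coeff n H := by
    intro n
    rw [(hC p β n).2 z hz, hH, PowerSeries.coeff_mul, Finset.Nat.sum_antidiagonal_eq_sum_range_succ_mk]
    refine Finset.sum_congr rfl fun r hr => ?_
    have hr' : r ≤ n := by simp at hr; omega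
    simp only [us, PowerSeries.coeff_mk]
    have : z ^ ((n:ℤ) - 2 * r) = z⁻¹ ^ r * z ^ (n-r) := by
      rw [inv_pow, ← zpow_natCast, ← zpow_natCast, ← _root_.zpow_neg, ← zpow_add₀ hz]
      congr 1; push_cast [hr']; ring
    rw [this]; field_simp
  have key : H - PowerSeries.C (z+z⁻¹) * (PowerSeries.X * H) + PowerSeries.X * (PowerSeries.X * H)
      = PowerSeries.rescale p H - PowerSeries.C (β*(z+z⁻¹)) * (PowerSeries.X * PowerSeries.rescale p H)
        + PowerSeries.C (β^2) * (PowerSeries.X * (PowerSeries.X * PowerSeries.rescale p H)) := by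
    have a1 := us_eq hp β z
    have a2 := us_eq hp β z⁻¹
    have hc : PowerSeries.C z * PowerSeries.C z⁻¹ = 1 := by
      rw [← map_mul, mul_inv_cancel₀ hz, map_one]
    rw [hH]
    simp only [map_mul, map_add, map_pow] at a1 a2 ⊢
    generalize us p β z = u at *
    generalize us p β z⁻¹ = v at *
    generalize PowerSeries.rescale p u = u' at *
    generalize PowerSeries.rescale p v = v' at *
    generalize PowerSeries.C z = Z at *
    generalize PowerSeries.C z⁻¹ = Z' at *
    generalize PowerSeries.C β = B at *
    generalize (PowerSeries.X : PowerSeries ℂ) = X at *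
    linear_combination (v - Z'*X*v) * a1 + (u' - B*Z*X*u')*a2 + (-X^2*u*v + B^2*X^2*u'*v') * hc
  simp only [hco]
  clear_value H
  rw [show 2 * ((z+z⁻¹)/2) = z + z⁻¹ by ring]
  have h00 : PowerSeries.coeff 0 H = 1 := by rw [hH]; simp [us, qp_zero]
  generalize z + z⁻¹ = w at key ⊢
  refine ⟨?_, ?_, ?_⟩
  · exact h00
  · have := congrArg (PowerSeries.coeff 1) key
    simp only [map_sub, map_add, PowerSeries.coeff_C_mul, 
      PowerSeries.coeff_rescale] at this
    rw [show (1:ℕ) = 0 + 1 from rfl] at this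
    simp only [PowerSeries.coeff_succ_X_mul, PowerSeries.coeff_zero_X_mul, PowerSeries.coeff_rescale] at this
    simp only [zero_add, pow_one, pow_zero] at this
    linear_combination this
  · intro n
    have := congrArg (PowerSeries.coeff (n+1+1)) key
    simp only [map_sub, map_add, PowerSeries.coeff_C_mul, PowerSeries.coeff_succ_X_mul,
      PowerSeries.coeff_rescale] at this
    linear_combination this

/-- N-indexed `L`, without normalisation: `q^(m-k) [m]/[m+k+1] C_{m-k}`. -/
def Lf (q x : ℂ) (C : ℂ → ℂ → ℕ → Polynomial ℂ) (m k : ℕ) : ℂ :=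
  if k ≤ m then q^(m-k) * qp (q^2) (q^2) m / qp (q^2) (q^2) (m+k+1)
    * (C (q^2) ((q^2)^(k+1)) (m-k)).eval x else 0

def Mf (q x : ℂ) (C : ℂ → ℂ → ℕ → Polynomial ℂ) (k i : ℕ) : ℂ :=
  if i ≤ k then q^((2*k+1)*(k-i)) * qp (q^2) (q^2) (k+i) / qp (q^2) (q^2) i
    * (C (q^2) ((q^2)^(-(k:ℤ))) (k-i)).eval x else 0

def lam (p : ℂ) (k : ℕ) : ℂ := p^(-(k:ℤ)) + p^(k+1)

lemma fa_succ (p : ℂ) (n : ℕ) : qp p p (n+1) = qp p p n * (1 - p^(n+1)) := by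
  rw [qp_succ, pow_succ']

section
variable {q : ℂ} (h0 : q ≠ 0) (hp : ∀ n : ℕ, 0 < n → (q^2) ^ n ≠ 1)
  {C : ℂ → ℂ → ℕ → Polynomial ℂ} (hC : IsUltra C) (x : ℂ)
include h0 hp hC

lemma Lf_rec (m k : ℕ) :
    2*x*(1-(q^2)^(m+2))^2 * Lf q x C (m+1) k
      = (1-(q^2)^(m+2)*(q^2)^(-(k:ℤ)))*(1-(q^2)^(m+k+3))*q⁻¹*Lf q x C (m+2) k
        + q*(1-(q^2)^(m+1))*(1-(q^2)^(m+2))*Lf q x C m k := by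
  have hp0 : q^2 ≠ 0 := pow_ne_zero _ h0
  obtain ⟨r0, r1, r2⟩ := ultra_rec hC hp ((q^2)^(k+1)) x
  unfold Lf
  rcases lt_trichotomy (m+1) k with h | h | h
  · rcases Nat.lt_or_eq_of_le (Nat.succ_le_of_lt h) with h' | h'
    · rw [if_neg (by omega), if_neg (by omega), if_neg (by omega)]; simp
    · subst h'
      rw [if_neg (show ¬ (m+1).succ ≤ m+1 by omega), if_neg (show ¬ (m+1).succ ≤ m by omega), Nat.succ_eq_add_one, show m+1+1 = m+2 by rfl, _root_.zpow_neg, zpow_natCast,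
        mul_inv_cancel₀ (pow_ne_zero _ hp0)]; simp
  · subst h
    rw [if_pos (by omega), if_pos (by omega), if_neg (by omega)]
    rw [show m+2-(m+1) = 1 by omega, show m+1-(m+1)=0 by omega]
    rw [r0] at r1 ⊢
    rw [show m+2+(m+1)+1 = (m+1+(m+1)+1)+1 by ring, fa_succ _ (m+1+(m+1)+1), fa_succ _ (m+1),
      _root_.zpow_neg, zpow_natCast, show m+1+(m+1)+1+1 = m+(m+1)+3 by ring, show m+1+1 = m+2 by ring]
    have f1 := fa_ne hp (m+1)
    have f2 := fa_ne hp (m+1+(m+1)+1)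
    have f3 := one_sub_ne hp (m+(m+1)+2)
    have e1 : (q^2)^(m+2) * ((q^2)^(m+1))⁻¹ = q^2 := by
      rw [pow_succ (q^2) (m+1), mul_right_comm, mul_inv_cancel₀ (pow_ne_zero _ hp0), one_mul]
    rw [e1]
    rw [show m+(m+1)+2+1 = m+(m+1)+3 by ring] at f3
    rw [show m+1+1 = m+2 by ring] at r1
    generalize qp (q^2) (q^2) (m+1) = A at *
    generalize qp (q^2) (q^2) (m+1+(m+1)+1) = B at *
    generalize 1 - (q^2)^(m+(m+1)+3) = G at *
    generalize (q^2)^(m+2) = T at *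
    generalize eval x (C (q^2) _ 1) = c1 at *
    linear_combination (norm := skip) (-(1-T)*A/B) * r1
    field_simp
    ring
  · obtain ⟨d, rfl⟩ : ∃ d, m = k + d := ⟨m-k, by omega⟩
    rw [if_pos (by omega), if_pos (by omega), if_pos (by omega)]
    have r := r2 d
    rw [show k+d+2-k = d+2 by omega, show k+d+1-k = d+1 by omega, show k+d-k=d by omega]
    rw [show k+d+2+k+1 = (k+d+k+1)+1+1 by ring, show k+d+1+k+1 = (k+d+k+1)+1 by ring,
      fa_succ _ (k+d+k+1+1), fa_succ _ (k+d+k+1), show k+d+2=(k+d)+1+1 by ring, fa_succ _ (k+d+1),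
      fa_succ _ (k+d)]
    have e1 : (q^2)^(k+d+1+1) * (q^2)^(-(k:ℤ)) = (q^2)^(d+2) := by
      rw [show k+d+1+1 = k+(d+2) by ring, pow_add (q^2) k, _root_.zpow_neg, zpow_natCast, mul_right_comm,
       mul_inv_cancel₀ (pow_ne_zero _ hp0), one_mul]
    rw [e1]
    have f1 := fa_ne hp (k+d)
    have f2 := fa_ne hp (k+d+k+1)
    have f3 := one_sub_ne hp (k+d+k+1)
    have f4 := one_sub_ne hp (k+d+k+1+1)
    have e2 : ((q^2)^(k+1))^2 * (q^2)^d = (q^2)^(k+d+k+1+1) := by ring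
    have e3 : (q^2)^(k+1) * (q^2)^(d+1) = (q^2)^(k+d+1+1) := by ring
    rw [e2, e3] at r
    rw [show k+d+k+3 = k+d+k+1+1+1 by ring]
    generalize eval x (C (q^2) ((q^2)^(k+1)) (d+2)) = c2 at *
    generalize eval x (C (q^2) ((q^2)^(k+1)) (d+1)) = c1 at *
    generalize eval x (C (q^2) ((q^2)^(k+1)) d) = c0 at *
    generalize qp (q^2) (q^2) (k+d) = A at *
    generalize qp (q^2) (q^2) (k+d+k+1) = B at *
    have g4 : 1 - (q^2)^(k+d+k+1+1) = 1 - (q^2)^(k+d+k+1+1) := rfl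
    rw [pow_succ q (d+1), pow_succ q d]
    generalize (q^2)^(k+d+k+1+1) = T at *
    generalize 1 - (q^2)^(k+d+k+1+1+1) = G at *
    generalize (q^2)^(d+2) = T2 at *
    generalize (q^2)^(k+d+1+1) = T3 at *
    generalize (q^2)^(k+d+1) = T4 at *
    generalize q^d = Q at *
    linear_combination (norm := skip) (-(Q*q*(1-T3)*A*(1-T4)/(B*(1-T)))) * r
    field_simp
    ring

lemma Mf_rec (k i : ℕ) (hi : i ≤ k):
    Mf q x C k i * (lam (q^2) i - lam (q^2) k)
      = Mf q x C k (i+1) * (2*x*q*(q^2)^(-((i:ℤ)+1))*(1-(q^2)^(i+1))^2)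
       - Mf q x C k (i+2) * ((q^2)^(-((i:ℤ)+1))*(1-(q^2)^(i+1))*(1-(q^2)^(i+2))) := by
  have hp0 : q^2 ≠ 0 := pow_ne_zero _ h0
  obtain ⟨r0, r1, r2⟩ := ultra_rec hC hp ((q^2)^(-(k:ℤ))) x
  have z2 : (q^2)^(-((i:ℤ)+1)) = ((q^2)^(i+1))⁻¹ := by
    rw [_root_.zpow_neg]; norm_cast
  have z3 : ∀ k : ℕ, (q^2)^(-(k:ℤ)) = ((q^2)^k)⁻¹ := fun k => by
    rw [_root_.zpow_neg]; norm_cast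
  unfold Mf lam
  rw [z2]
  obtain ⟨d, rfl⟩ := Nat.exists_eq_add_of_le hi
  rw [z3] at r0 r1 r2
  rw [z3, z3]
  have fi := one_sub_ne hp i
  have fi2 := one_sub_ne hp (i+1)
  have fa := fa_ne hp i
  have hqi : (q^2)^i ≠ 0 := pow_ne_zero _ hp0
  rw [if_pos (by omega)]
  rcases d with _ | _ | d
  · rw [if_neg (by omega), if_neg (by omega)]; simp
  · rw [if_pos (by omega), if_neg (by omega)]
    simp only [zero_add] at *
    rw [show i+1-i=1 by omega, show i+1-(i+1)=0 by omega]
    rw [r0] at *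
    rw [show i+1+(i+1) = i+1+i+1 by ring, fa_succ _ (i+1+i), fa_succ _ i, mul_zero, pow_zero]
    generalize qp (q^2) (q^2) (i+1+i) = A at *
    generalize qp (q^2) (q^2) i = B at *
    generalize eval x (C (q^2) _ 1) = c1 at *
    have e1 : q^((2*(i+1)+1)*1) = (q^2)^i * q^3 := by ring
    have e2 : (q^2)^(i+1+i+1) = ((q^2)^i)^2*(q^2)^2 := by ring
    have e3 : (q^2)^(i+1+1) = (q^2)^i*(q^2)^2 := by ring
    have e4 : (q^2)^(i+1) = (q^2)^i*(q^2) := by ring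
    rw [e1, e2, e3]
    rw [e4] at r1 fi ⊢
    generalize (q^2)^i = T at *
    have h1q : 1 - q^2 ≠ 0 := by simpa using one_sub_ne hp 0
    linear_combination (norm := skip) (-(1-T^2*q^4)*q*A/B) * r1
    field_simp
    ring
  · rw [if_pos (by omega), if_pos (by omega)]
    have r := r2 d
    rw [show i+(d+1+1)-i=d+2 by omega, show i+(d+1+1)-(i+1)=d+1 by omega,
      show i+(d+1+1)-(i+2)=d by omega]
    rw [show i+(d+1+1)+(i+2) = (i+(d+1+1)+i)+1+1 by ring, show i+(d+1+1)+(i+1) = (i+(d+1+1)+i)+1 by ring,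
      fa_succ _ (i+(d+1+1)+i+1), fa_succ _ (i+(d+1+1)+i), show i+2=i+1+1 by ring, fa_succ _ (i+1), fa_succ _ i]
    generalize qp (q^2) (q^2) (i+(d+1+1)+i) = A at *
    generalize qp (q^2) (q^2) i = B at *
    generalize eval x (C (q^2) _ (d+2)) = c2 at *
    generalize eval x (C (q^2) _ (d+1)) = c1 at *
    generalize eval x (C (q^2) _ d) = c0 at *
    have e0 : q^((2*(i+(d+1+1))+1)*(d+1)) = q^((2*(i+(d+1+1))+1)*d) * ((q^2)^i*(q^2)^d*q^5) := by ring
    have e1 : q^((2*(i+(d+1+1))+1)*(d+2)) = q^((2*(i+(d+1+1))+1)*d) * ((q^2)^i*(q^2)^d*q^5)^2 := by ring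
    rw [e0, e1]
    generalize q^((2*(i+(d+1+1))+1)*d) = Q at *
    have g1 : (q^2)^(i+(d+1+1)) = (q^2)^i*(q^2)^d*q^4 := by ring
    have g2 : (q^2)^(i+(d+1+1)+1) = (q^2)^i*(q^2)^d*q^6 := by ring
    have g3 : (q^2)^(i+(d+1+1)+i+1) = ((q^2)^i)^2*(q^2)^d*q^6 := by ring
    have g4 : (q^2)^(i+(d+1+1)+i+1+1) = ((q^2)^i)^2*(q^2)^d*q^8 := by ring
    have g5 : (q^2)^(d+2) = (q^2)^d*q^4 := by ring
    have g6 : (q^2)^(d+1) = (q^2)^d*q^2 := by ring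
    rw [g2, g3, g4, g1]
    rw [g1, g5, g6] at r
    have hqd : (q^2)^d ≠ 0 := pow_ne_zero _ hp0
    have g7 : (q^2)^(i+1) = (q^2)^i*q^2 := by ring
    rw [g7] at fi ⊢
    generalize 1 - (q^2)^(i+1+1) = U at *
    generalize (q^2)^i = T at *
    generalize (q^2)^d = S at *
    linear_combination (norm := skip) (-(Q*(T*S*q^5)^2*A/B*(1-T^2*S*q^6)/(T*S*q^4))) * r
    field_simp
    ring
end
end QX

set_option linter.unusedSectionVars false
namespace QX

lemma telesc (M Y a b lm : ℕ → ℂ) (u v : ℂ)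
    (hM : ∀ i, M i * (lm i - u) = M (i+1) * a (i+1) - M (i+2) * b (i+2))
    (h0 : (lm 0 - v) * Y 0 = 0) (h1 : (lm 1 - v) * Y 1 = a 1 * Y 0)
    (h2 : ∀ m, (lm (m+2) - v) * Y (m+2) = a (m+2) * Y (m+1) - b (m+2) * Y m) (N : ℕ) :
    (v - u) * ∑ m ∈ Finset.range (N+2), M m * Y m
      = M (N+2) * a (N+2) * Y (N+1) - M (N+3) * b (N+3) * Y (N+1) - M (N+2) * b (N+2) * Y N := by
  induction N with
  | zero =>
    have e0 := hM 0
    have e1 := hM 1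
    simp only [Finset.sum_range_succ, Finset.sum_range_zero]
    simp only [zero_add] at *
    linear_combination Y 0 * e0 + Y 1 * e1 - M 0 * h0 - M 1 * h1
  | succ N ih =>
    rw [Finset.sum_range_succ, mul_add, ih]
    linear_combination Y (N+2) * hM (N+2) - M (N+2) * h2 N

section
variable {q : ℂ} (h0 : q ≠ 0) (hp : ∀ n : ℕ, 0 < n → (q^2) ^ n ≠ 1)
  {C : ℂ → ℂ → ℕ → Polynomial ℂ} (hC : IsUltra C) (x : ℂ)
include h0 hp hC

lemma Lf_rec0 (k : ℕ) :
    2*x*(1-(q^2))^2 * Lf q x C 0 k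
      = (1-(q^2)*(q^2)^(-(k:ℤ)))*(1-(q^2)^(k+2))*q⁻¹*Lf q x C 1 k := by
  have hp0 : q^2 ≠ 0 := pow_ne_zero _ h0
  rcases k with _ | _ | k
  · obtain ⟨r0, r1, r2⟩ := ultra_rec hC hp ((q^2)^(0+1)) x
    unfold Lf
    rw [if_pos (by omega), if_pos (by omega)]
    simp only [zero_add, Nat.sub_zero, pow_one, fa_succ _ 1, add_zero] at *
    rw [r0] at r1 ⊢
    have f1 := one_sub_ne hp 0
    have f2 := one_sub_ne hp 1
    have f5 : qp (q^2) (q^2) 1 = 1 - q^2 := by simp [qp]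
    rw [f5, qp_zero]
    simp only [zero_add, pow_one, pow_zero, Nat.cast_zero, neg_zero, zpow_zero] at *
    rw [show 1 + 1 = 2 by rfl] at *
    generalize eval x (C (q^2) _ 1) = c1 at *
    generalize 1 - (q^2)^2 = G at *
    linear_combination (norm := skip) (-1) * r1
    field_simp
    ring
  · unfold Lf
    rw [if_neg (by omega)]
    simp [hp0]
  · unfold Lf
    rw [if_neg (by omega), if_neg (by omega)]
    simp

lemma lam_sub (m k : ℕ) : lam (q^2) m - lam (q^2) k
    = ((q^2)^m)⁻¹ * (1-(q^2)^m*(q^2)^(-(k:ℤ)))*(1-(q^2)^(m+k+1)) := by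
  have hp0 : q^2 ≠ 0 := pow_ne_zero _ h0
  unfold lam
  rw [_root_.zpow_neg, _root_.zpow_neg, zpow_natCast, zpow_natCast]
  have a := pow_ne_zero m hp0
  have b := pow_ne_zero k hp0
  rw [show (q^2)^(m+k+1) = (q^2)^m*(q^2)^k*q^2 by ring, pow_succ (q^2) m, pow_succ (q^2) k]
  generalize (q^2)^m = A at *
  generalize (q^2)^k = B at *
  field_simp
  ring

lemma lam_ne {m k : ℕ} (h : m ≠ k) : lam (q^2) m - lam (q^2) k ≠ 0 := by
  have hp0 : q^2 ≠ 0 := pow_ne_zero _ h0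
  rw [lam_sub h0 hp hC]
  refine mul_ne_zero (mul_ne_zero (inv_ne_zero (pow_ne_zero _ hp0)) ?_) (one_sub_ne hp _)
  rw [_root_.zpow_neg, zpow_natCast]
  rcases lt_or_gt_of_ne h with h | h
  · have := pow_sub_ne hp0 hp h
    have b := pow_ne_zero k hp0
    intro h'
    apply this
    field_simp at h'
    linear_combination -h'
  · have := pow_sub_ne hp0 hp h
    have b := pow_ne_zero k hp0
    intro h'
    apply this
    field_simp at h'
    linear_combination h'

lemma Mf_van {k i : ℕ} (h : k < i) : Mf q x C k i = 0 := by
  unfold Mf; rw [if_neg (by omega)]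

lemma Lf_van {m k : ℕ} (h : m < k) : Lf q x C m k = 0 := by
  unfold Lf; rw [if_neg (by omega)]

lemma orth {k k' : ℕ} (h : k ≠ k') :
    ∑ m ∈ Finset.range (k+2), Mf q x C k m * Lf q x C m k' = 0 := by
  have hp0 : q^2 ≠ 0 := pow_ne_zero _ h0
  have := telesc (fun m => Mf q x C k m) (fun m => Lf q x C m k')
    (fun m => 2*x*q*((q^2)^m)⁻¹*(1-(q^2)^m)^2)
    (fun m => q^2*((q^2)^m)⁻¹*(1-(q^2)^(m-1))*(1-(q^2)^m)) (fun m => lam (q^2) m)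
    (lam (q^2) k) (lam (q^2) k') ?_ ?_ ?_ ?_ k
  · simp only [Mf_van h0 hp hC x (show k < k + 2 by omega), Mf_van h0 hp hC x (show k < k + 3 by omega)] at this
    have h2 := lam_ne h0 hp hC h.symm
    simpa [h2] using this
  · intro i
    by_cases hi : i ≤ k
    · have := Mf_rec h0 hp hC x k i hi
      rw [this]
      have z2 : (q^2)^(-((i:ℤ)+1)) = ((q^2)^(i+1))⁻¹ := by
        rw [_root_.zpow_neg]; norm_cast
      rw [z2, show i+2-1=i+1 by omega]
      have a := pow_ne_zero i hp0
      rw [pow_succ (q^2) (i+1), pow_succ (q^2) i]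
      generalize (q^2)^i = A at *
      field_simp
    · simp [Mf_van h0 hp hC x (show k < i by omega), Mf_van h0 hp hC x (show k < i + 1 by omega),
        Mf_van h0 hp hC x (show k < i + 2 by omega)]
  · rcases k' with _ | k'
    · simp
    · simp [Lf_van h0 hp hC x (show 0 < k'+1 by omega)]
  · have := Lf_rec0 h0 hp hC x k'
    rw [lam_sub h0 hp hC, show 1 + k' + 1 = k' + 2 by ring]
    simp only [pow_one]
    linear_combination (norm := skip) (- q * (q^2)⁻¹) * this
    field_simp
    ring
  · intro m
    have := Lf_rec h0 hp hC x m k'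
    rw [lam_sub h0 hp hC, show m + 2 + k' + 1 = m + k' + 3 by ring, show m+2-1=m+1 by omega]
    have a := pow_ne_zero (m+2) hp0
    generalize (q^2)^(m+2) = T at *
    linear_combination (norm := skip) (- q * T⁻¹) * this
    field_simp
    ring

lemma diagML (k : ℕ) : (1 - (q^2)^(2*k+1)) * (Mf q x C k k * Lf q x C k k) = 1 := by
  unfold Mf Lf
  rw [if_pos le_rfl, if_pos le_rfl]
  obtain ⟨r0, -⟩ := ultra_rec hC hp ((q^2)^(k+1)) x
  obtain ⟨r1, -⟩ := ultra_rec hC hp ((q^2)^(-(k:ℤ))) x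
  rw [Nat.sub_self, r0, r1, fa_succ, ← two_mul]
  have f1 := fa_ne hp k
  have f2 := fa_ne hp (2*k)
  have f3 := one_sub_ne hp (2*k)
  simp only [mul_zero, pow_zero]
  generalize 1 - (q^2)^(2*k+1) = G at *
  field_simp

lemma LM_one (L : ℕ) {i j : ℕ} (hi : i ≤ L) (hj : j ≤ L) :
    ∑ k ∈ Finset.range (L+1), Lf q x C j k * ((1 - (q^2)^(2*k+1)) * Mf q x C k i)
      = if i = j then 1 else 0 := by
  let A : Matrix (Fin (L+1)) (Fin (L+1)) ℂ := Matrix.of fun k i => (1 - (q^2)^(2*(k:ℕ)+1)) * Mf q x C k i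
  let B : Matrix (Fin (L+1)) (Fin (L+1)) ℂ := Matrix.of fun m k => Lf q x C m k
  have hAB : A * B = 1 := by
    ext k k'
    rw [Matrix.mul_apply]
    simp only [A, B, Matrix.of_apply]
    rw [Fin.sum_univ_eq_sum_range (fun m => (1 - (q^2)^(2*(k:ℕ)+1)) * Mf q x C k m * Lf q x C m k')]
    simp only [mul_assoc]
    rw [← Finset.mul_sum]
    have hs : ∑ m ∈ Finset.range (L+1), Mf q x C k m * Lf q x C m k'
        = ∑ m ∈ Finset.range ((k:ℕ)+1), Mf q x C k m * Lf q x C m k' := by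
      symm
      apply Finset.sum_subset
      · intro a; have := k.2; simp; omega
      · intro a _ ha
        rw [Mf_van h0 hp hC x (by simp at ha; omega), zero_mul]
    rw [hs]
    by_cases h : k = k'
    · subst h
      rw [Matrix.one_apply_eq, Finset.sum_eq_single (k:ℕ), diagML h0 hp hC]
      · intro b hb hb'
        rw [Lf_van h0 hp hC x (by simp at hb; omega), mul_zero]
      · simp
    · rw [Matrix.one_apply_ne h]
      have := orth h0 hp hC x (show (k:ℕ) ≠ k' from fun e => h (Fin.ext e))
      rw [Finset.sum_range_succ, Mf_van h0 hp hC x (show (k:ℕ) < k+1 by omega), zero_mul, add_zero] at this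
      rw [this, mul_zero]
  have hBA : B * A = 1 := mul_eq_one_comm.mp hAB
  have := congrFun (congrFun hBA ⟨j, by omega⟩) ⟨i, by omega⟩
  rw [Matrix.mul_apply] at this
  simp only [A, B, Matrix.of_apply] at this
  rw [Fin.sum_univ_eq_sum_range (fun k => Lf q x C j k * ((1 - (q^2)^(2*k+1)) * Mf q x C k i))] at this
  rw [this, Matrix.one_apply]
  simp [eq_comm]

end
end QX

namespace QX

def hk (q : ℂ) (L k : ℕ) : ℂ := (-1)^k * q^(k*(k+1)) * qp (q^2) (q^2) L * qp (q^2) (q^2) (L+1)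
  / (qp (q^2) (q^2) (L-k) * qp (q^2) (q^2) (L+k+1))

def Pf (q x : ℂ) (L : ℕ) (C : ℂ → ℂ → ℕ → Polynomial ℂ) (n i j : ℕ) : ℂ :=
  ∑ k ∈ Finset.range (L+1), ((1 - (q^2)^(2*k+1)) * Mf q x C k i * hk q L k) *
    (F (q^2) L k n j * Lf q x C (n+j) k)

section
variable {q : ℂ} (h0 : q ≠ 0) (hp : ∀ n : ℕ, 0 < n → (q^2) ^ n ≠ 1)
  {C : ℂ → ℂ → ℕ → Polynomial ℂ} (hC : IsUltra C) (x : ℂ)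
include h0 hp

lemma hk_Sk {L : ℕ} (k : ℕ) (hk' : k ≤ L) : hk q L k * Sk (q^2) ((q^2)^(L+1)) k = 1 := by
  have hp0 : q^2 ≠ 0 := pow_ne_zero _ h0
  induction k with
  | zero =>
    unfold hk Sk
    have f1 := fa_ne hp L
    have f2 := fa_ne hp (L+1)
    have f3 := one_sub_ne hp L
    simp [phi_zero]
    generalize 1 - (q^2)^(L+1) = G at *
    field_simp
  | succ k ih =>
    have ih := ih (by omega)
    have hs := Sk_succ hp0 hp ((q^2)^(L+1)) k (fun s hs => pow_sub_ne hp0 hp (by omega))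
    obtain ⟨d, rfl⟩ : ∃ d, L = k + 1 + d := ⟨L-(k+1), by omega⟩
    have hh : hk q (k+1+d) (k+1) * (1 - (q^2)^(k+1+d+1)*(q^2)^(k+1))
        = hk q (k+1+d) k * ((q^2)^(k+1+d+1) - (q^2)^(k+1)) := by
      unfold hk
      rw [show k+1+d-(k+1) = d by omega, show k+1+d-k = d+1 by omega, fa_succ _ d,
        show k+1+d+(k+1)+1 = (k+1+d+k+1)+1 by ring, fa_succ _ (k+1+d+k+1)]
      rw [show (q^2)^(k+1+d+1)*(q^2)^(k+1) = (q^2)^(k+1+d+k+1+1) by ring]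
      have f1 := fa_ne hp d
      have f2 := fa_ne hp (k+1+d+k+1)
      have f3 := one_sub_ne hp d
      have f4 := one_sub_ne hp (k+1+d+k+1)
      rw [show (q^2)^(k+1+d+1) = (q^2)^(k+1)*(q^2)^(d+1) by ring,
        show q^((k+1)*(k+1+1)) = q^(k*(k+1)) * (q^2)^(k+1) by ring, pow_succ (-1 : ℂ) k]
      generalize 1 - (q^2)^(k+1+d+k+1+1) = G at *
      generalize (q^2)^(d+1) = T at *
      generalize (q^2)^(k+1) = S at *
      field_simp
      ring
    have hne : (q^2)^(k+1+d+1) - (q^2)^(k+1) ≠ 0 := by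
      have := pow_sub_ne hp0 hp (show k+1 < k+1+d+1 by omega)
      intro h; apply this; linear_combination -h
    apply mul_left_cancel₀ hne
    linear_combination hk q (k+1+d) (k+1) * hs + Sk (q^2) ((q^2)^(k+1+d+1)) k * hh + ((q^2)^(k+1+d+1) - (q^2)^(k+1))* ih

include hC

lemma Pf_zero {L i j : ℕ} (hi : i ≤ L) (hj : j ≤ L) : Pf q x L C 0 i j = if i = j then 1 else 0 := by
  have hp0 : q^2 ≠ 0 := pow_ne_zero _ h0
  rw [← LM_one h0 hp hC x L hi hj]
  unfold Pf
  refine Finset.sum_congr rfl fun k hk' => ?_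
  have hk' : k ≤ L := by simp at hk'; omega
  by_cases hkj : k ≤ j
  · rw [F_zero hp0 hp hk' hkj, zero_add]
    linear_combination ((1 - (q^2)^(2*k+1)) * Mf q x C k i * Lf q x C j k) * hk_Sk h0 hp k hk'
  · rw [zero_add, Lf_van h0 hp hC x (show j < k by omega)]; ring

lemma G_rec {L k n j : ℕ} (hj : j ≤ L) (hk : k ≤ L) :
    2*x*((1-(q^2)^(n+j+1))*(1-(q^2)^(L-j+n+1))) * (F (q^2) L k n j * Lf q x C (n+j) k)
     = q⁻¹ * (1-(q^2)^(n+1)) * (1-(q^2)^(n+L+2)) * (F (q^2) L k (n+1) j * Lf q x C (n+1+j) k)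
      + q⁻¹ * (q^2)^(n+1) * (1-(q^2)^(j+1)) * (1-(q^2)^(L-j)) * (F (q^2) L k n (j+1) * Lf q x C (n+(j+1)) k)
      + q⁻¹ * (q^2)^(n+1) * (1-(q^2)^(L-j+1)) * (1-(q^2)^j) * (F (q^2) L k n (j-1) * Lf q x C (n+(j-1)) k)
      + q * (1-(q^2)^n) * (1-(q^2)^(n+L+1)) * (F (q^2) L k (n-1) j * Lf q x C (n-1+j) k) := by
  have hp0 : q^2 ≠ 0 := pow_ne_zero _ h0
  have hb : (1-(q^2)^j) * (F (q^2) L k n (j-1) * Lf q x C (n+(j-1)) k)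
      = (1-(q^2)^j) * F (q^2) L k n (j-1) * Lf q x C (n+j-1) k := by
    rcases j with _ | j
    · simp
    · rw [show n+(j+1-1) = n+(j+1)-1 by omega]; ring
  have hc : (1-(q^2)^n) * (F (q^2) L k (n-1) j * Lf q x C (n-1+j) k)
      = (1-(q^2)^n) * F (q^2) L k (n-1) j * Lf q x C (n+j-1) k := by
    rcases n with _ | n
    · simp
    · rw [show n+1-1+j = n+1+j-1 by omega]; ring
  have t1 : (1-(q^2)^(n+j+1))*((1-(q^2)^(n+1)) * (1-(q^2)^(n+L+2)) * F (q^2) L k (n+1) j 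
        + (q^2)^(n+1) * (1-(q^2)^(j+1)) * (1-(q^2)^(L-j)) * F (q^2) L k n (j+1)) * Lf q x C (n+j+1) k
      = (1 - (q^2)^(n+j+1) * (q^2)^(-(k:ℤ))) * (1 - (q^2)^(n+j+k+2)) * (1 - (q^2)^(L-j+n+1)) * F (q^2) L k n j
         * Lf q x C (n+j+1) k := by
    by_cases h : k ≤ n+j+1
    · rw [rel1 hp0 hp hj hk h]
    · rw [Lf_van h0 hp hC x (by omega)]; ring
  have t2 : ((1-(q^2)^n) * (1 - (q^2)^(n+L+1)) * F (q^2) L k (n-1) j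
        + (q^2)^n * (1-(q^2)^(L-j+1)) * (1-(q^2)^j) * F (q^2) L k n (j-1)) * Lf q x C (n+j-1) k
      = (1 - (q^2)^(n+j)) * (1 - (q^2)^(L-j+n+1)) * F (q^2) L k n j * Lf q x C (n+j-1) k := by
    by_cases h : k + 1 ≤ n+j
    · rw [rel2 hp0 hp hj h]
    · by_cases h' : n + j = 0
      · obtain ⟨rfl, rfl⟩ : n = 0 ∧ j = 0 := by omega
        simp
      · rw [Lf_van h0 hp hC x (by omega)]; ring
  have t3 : 2*x*(1-(q^2)^(n+j+1))^2 * Lf q x C (n+j) k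
      = (1-(q^2)^(n+j+1)*(q^2)^(-(k:ℤ)))*(1-(q^2)^(n+j+k+2))*q⁻¹*Lf q x C (n+j+1) k
        + q*(1-(q^2)^(n+j))*(1-(q^2)^(n+j+1))*Lf q x C (n+j-1) k := by
    rcases hN : n + j with _ | N
    · have := Lf_rec0 h0 hp hC x k
      simp only [zero_add, pow_one, pow_zero]
      linear_combination this
    · have := Lf_rec h0 hp hC x N k
      rw [show N+1+k+2 = N+k+3 by ring]
      exact this
  have hne := one_sub_ne hp (n+j)
  apply mul_left_cancel₀ hne
  rw [show n+1+j = n+j+1 by ring, show n+(j+1) = n+j+1 by ring]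
  rw [show n+L+2=n+L+2 by rfl] at *
  have qq : q⁻¹ * (q^2)^(n+1) = q * (q^2)^n := by
    rw [pow_succ]; field_simp
  linear_combination (1 - (q^2)^(L-j+n+1)) * F (q^2) L k n j * t3 - q⁻¹ * t1
    - (1-(q^2)^(n+j+1)) * q * t2 - (1-(q^2)^(n+j+1)) * (q⁻¹*(q^2)^(n+1)*(1-(q^2)^(L-j+1)) * hb)
    - (1-(q^2)^(n+j+1)) * q * (1-(q^2)^(n+L+1)) * hc - (1-(q^2)^(n+j+1)) * (1-(q^2)^(L-j+1))* (1-(q^2)^j) * F (q^2) L k n (j-1) * Lf q x C (n+j-1) k * qq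

lemma Pf_rec {L n i j : ℕ} (hj : j ≤ L) :
    2*x*((1-(q^2)^(n+j+1))*(1-(q^2)^(L-j+n+1))) * Pf q x L C n i j
     = q⁻¹ * (1-(q^2)^(n+1)) * (1-(q^2)^(n+L+2)) * Pf q x L C (n+1) i j
      + q⁻¹ * (q^2)^(n+1) * (1-(q^2)^(j+1)) * (1-(q^2)^(L-j)) * Pf q x L C n i (j+1)
      + q⁻¹ * (q^2)^(n+1) * (1-(q^2)^(L-j+1)) * (1-(q^2)^j) * Pf q x L C n i (j-1)
      + q * (1-(q^2)^n) * (1-(q^2)^(n+L+1)) * Pf q x L C (n-1) i j := by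
  unfold Pf
  simp only [Finset.mul_sum, ← Finset.sum_add_distrib]
  refine Finset.sum_congr rfl fun k hk' => ?_
  have hk' : k ≤ L := by simp at hk'; omega
  linear_combination ((1 - (q^2)^(2*k+1)) * Mf q x C k i * hk q L k) * G_rec h0 hp hC x (n := n) hj hk'

lemma Pf_symm (n : ℕ) {L i j : ℕ} (hi : i ≤ L) (hj : j ≤ L) :
    Pf q x L C n (L-i) (L-j) = Pf q x L C n i j := by
  induction n using Nat.strong_induction_on generalizing i j with
  | _ n ih =>
  rcases n with _ | n
  · rw [Pf_zero h0 hp hC x (by omega) (by omega), Pf_zero h0 hp hC x hi hj]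
    congr 1
    simp only [eq_iff_iff]; omega
  · have e1 := Pf_rec h0 hp hC x (n := n) (i := i) hj
    have e2 := Pf_rec h0 hp hC x (n := n) (i := L - i) (show L - j ≤ L by omega)
    have i0 := ih n (by omega) hi hj
    have i1 := ih (n-1) (by omega) hi hj
    have a1 : (1-(q^2)^(L-j)) * Pf q x L C n i (j+1) = (1-(q^2)^(L-j)) * Pf q x L C n (L-i) (L-j-1) := by
      by_cases h : j + 1 ≤ L
      · rw [← ih n (by omega) hi h, show L - (j+1) = L-j-1 by omega]
      · rw [show L - j = 0 by omega]; simp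
    have a2 : (1-(q^2)^j) * Pf q x L C n i (j-1) = (1-(q^2)^j) * Pf q x L C n (L-i) (L-j+1) := by
      rcases j with _ | j
      · simp
      · rw [← ih n (by omega) hi (show j+1-1 ≤ L by omega), show L - (j+1-1) = L-(j+1)+1 by omega]
    rw [show L - (L-j) = j by omega, show n + (L-j)+1 = L-j+n+1 by ring, i0, i1] at e2
    rw [show j+n+1 = n+j+1 by ring] at e2
    have hne : q⁻¹ * (1-(q^2)^(n+1)) * (1-(q^2)^(n+L+2)) ≠ 0 :=
      mul_ne_zero (mul_ne_zero (inv_ne_zero h0) (one_sub_ne hp _)) (one_sub_ne hp _)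
    apply mul_left_cancel₀ hne
    linear_combination e1 - e2 + q⁻¹ * (q^2)^(n+1) * (1-(q^2)^(j+1)) * a1
      + q⁻¹ * (q^2)^(n+1) * (1-(q^2)^(L-j+1)) * a2
end
end QX

namespace QX

lemma qp_inv {c : ℂ} (hc : c ≠ 0) (p : ℂ) (s : ℕ) : qp c⁻¹ p s = (-c⁻¹)^s * E p c s := by
  induction s with
  | zero => simp [qp_zero, E_zero]
  | succ s ih =>
    rw [qp_succ, E_succ, ih, pow_succ]
    field_simp
    ring

lemma E_fa (q : ℂ) {a : ℕ} (k : ℕ) (h : k ≤ a) :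
    E (q^2) ((q^2)^a) k * qp (q^2) (q^2) (a-k) * q^k = q^(k*k) * qp (q^2) (q^2) a := by
  induction k with
  | zero => simp [E_zero]
  | succ k ih =>
    have ih := ih (by omega)
    obtain ⟨d, rfl⟩ : ∃ d, a = k + 1 + d := ⟨a-(k+1), by omega⟩
    rw [show k+1+d-k = d+1 by omega, fa_succ] at ih
    rw [show k+1+d-(k+1) = d by omega, E_succ]
    rw [show q^((k+1)*(k+1)) = q^(k*k) * (q^2)^k * q by ring]
    rw [show (q^2)^(k+1+d) = (q^2)^k * (q^2)^(d+1) by ring] at *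
    linear_combination ((q^2)^k * q) * ih

lemma qp_fa (p : ℂ) (a n : ℕ) : qp p p a * qp (p^(a+1)) p n = qp p p (a+n) := by
  induction n with
  | zero => simp [qp_zero]
  | succ n ih =>
    rw [qp_succ, ← mul_assoc, ih, ← add_assoc, fa_succ, ← pow_add]
    congr 3; ring

lemma racah_F {p : ℂ} (hp0 : p ≠ 0) (hp : ∀ n : ℕ, 0 < n → p ^ n ≠ 1) {L k n j : ℕ}
    (hk : k ≤ L) (hkn : k ≤ n + j) :
    qRacah p 1 1 (p^(n+j+1))⁻¹ (p^(L+1))⁻¹ k j = F p L k n j := by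
  unfold qRacah F Fg
  have hs : ∑ s ∈ Finset.range (k+1), phi p k s * (E p (p^j) s * E p (p^(n+L+1)) s / (E p (p^(n+j)) s * E p (p^L) s))
      = ∑ s ∈ Finset.range (min k j+1), phi p k s * (E p (p^j) s * E p (p^(n+L+1)) s / (E p (p^(n+j)) s * E p (p^L) s)) := by
    symm
    apply Finset.sum_subset
    · intro a; simp; omega
    · intro a h1 h2
      rw [E_van p (show j < a by simp at h1 h2; omega)]; simp
  rw [hs]
  refine Finset.sum_congr rfl fun s hs => ?_
  have hs' : s ≤ k := by simp at hs; omega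
  have e1 : (p^(n+j+1))⁻¹ * (p^(L+1))⁻¹ * p^(j+1) = (p^(n+L+1))⁻¹ := by
    rw [show p^(n+j+1) = p^n*p^(j+1) by ring, show p^(n+L+1) = p^n*p^(L+1) by ring]
    have := pow_ne_zero (j+1) hp0
    field_simp
  have e2 : (1:ℂ) * (p^(L+1))⁻¹ * p = (p^L)⁻¹ := by
    rw [pow_succ]; field_simp
  have e3 : (p^(n+j+1))⁻¹ * p = (p^(n+j))⁻¹ := by
    rw [pow_succ]; field_simp
  rw [e1, e2, e3, _root_.zpow_neg p (j:ℤ), zpow_natCast, one_mul, one_mul, one_mul]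
  rw [qp_inv (pow_ne_zero _ hp0), qp_inv (pow_ne_zero _ hp0), qp_inv (pow_ne_zero _ hp0), qp_inv (pow_ne_zero _ hp0)]
  unfold phi
  have f1 := fa_ne hp s
  have f2 := E_ne hp0 hp (show s ≤ L by omega)
  have f3 := E_ne hp0 hp (show s ≤ n+j by omega)
  have key : (-(p^j)⁻¹)^s * (-(p^(n+L+1))⁻¹)^s * p^s = (-(p^L)⁻¹)^s * (-(p^(n+j))⁻¹)^s := by
    rw [← mul_pow, ← mul_pow, ← mul_pow]
    congr 1
    rw [show p^(n+L+1) = p^n*p^L*p by ring, show p^(n+j) = p^n*p^j by ring]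
    field_simp
  have g1 : (-(p^L)⁻¹)^s ≠ 0 := pow_ne_zero _ (neg_ne_zero.mpr (inv_ne_zero (pow_ne_zero _ hp0)))
  have g2 : (-(p^(n+j))⁻¹)^s ≠ 0 := pow_ne_zero _ (neg_ne_zero.mpr (inv_ne_zero (pow_ne_zero _ hp0)))
  generalize (-(p^L)⁻¹)^s = x1 at *
  generalize (-(p^(n+j))⁻¹)^s = x2 at *
  generalize (-(p^j)⁻¹)^s = x3 at *
  generalize (-(p^(n+L+1))⁻¹)^s = x4 at *
  generalize p^s = x5 at *
  generalize E p (p^L) s = y1 at *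
  generalize E p (p^(n+j)) s = y2 at *
  generalize E p (p^(n+L+1)) s = y3 at *
  generalize E p (p^j) s = y4 at *
  generalize qp p p s = y5 at *
  rw [div_mul_eq_mul_div, div_mul_div_comm, div_eq_div_iff (by positivity) (by positivity)]
  linear_combination (qp (p ^ (-(k:ℤ))) p s * qp (p ^ (k + 1)) p s * y4 * y3*y5^2*y2*y1) * key

lemma ne_term {q : ℂ} (h0 : q ≠ 0) (hp : ∀ n : ℕ, 0 < n → (q^2) ^ n ≠ 1)
    {L n i j k : ℕ} (hik : i ≤ k) (hkL : k ≤ L) (hkN : k ≤ n + j) (Fv c1 c2 : ℂ) :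
    (-1 : ℂ) ^ k *
            q ^ ((n : ℤ) + (2 * (k : ℤ) + 1) * ((k : ℤ) - (i : ℤ)) +
                (j : ℤ) * (2 * (k : ℤ) + 1) + 2 * (k : ℤ) * ((L : ℤ) + (n : ℤ) + 1) -
                (k : ℤ) ^ 2) *
            (qp (q ^ 2) (q ^ 2) k * qp (q ^ 2) (q ^ 2) (k + (i : ℕ)) /
              (qp (q ^ 2) (q ^ 2) (2 * k) * qp (q ^ 2) (q ^ 2) (i : ℕ))) *
            (qp ((q^2)^L)⁻¹ (q ^ 2) k *
                qp ((q^2)^(n+j))⁻¹ (q ^ 2) k /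
              (qp (q ^ 2) (q ^ 2) k * qp ((q^2)^(L+1+1)) (q ^ 2) k)) *
            (qp (q ^ 2) (q ^ 2) (n + j - k) /
              qp ((q^2) ^ (2*k+1+1)) (q ^ 2) (n + j - k)) * Fv * (c1 * c2)
     = ((1 - (q^2)^(2*k+1)) * (q^((2*k+1)*(k-i)) * qp (q^2) (q^2) (k+i) / qp (q^2) (q^2) i
    * c1) * hk q L k) * (Fv * (q^(n+j-k) * qp (q^2) (q^2) (n+j) / qp (q^2) (q^2) (n+j+k+1)
    * c2)) := by
  have hp0 : q^2 ≠ 0 := pow_ne_zero _ h0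
  unfold hk
  have a1 := qp_fa (q^2) (L+1) k
  have a2 := qp_fa (q^2) (2*k+1) (n+j-k)
  rw [show L+1+k = L+k+1 by ring] at a1
  rw [show 2*k+1+(n+j-k) = n+j+k+1 by omega, fa_succ] at a2
  have a3 := E_fa q k hkL
  have a4 := E_fa q k hkN
  rw [qp_inv (pow_ne_zero _ hp0), qp_inv (pow_ne_zero _ hp0)]
  have hz : q ^ ((n : ℤ) + (2 * (k : ℤ) + 1) * ((k : ℤ) - (i : ℤ)) +
                (j : ℤ) * (2 * (k : ℤ) + 1) + 2 * (k : ℤ) * ((L : ℤ) + (n : ℤ) + 1) -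
                (k : ℤ) ^ 2) = q^(n+j-k) * q^((2*k+1)*(k-i)) * ((q^2)^L)^k * ((q^2)^(n+j))^k * q^k*q^k*q^k / q^(k*k) := by
    rw [eq_div_iff (pow_ne_zero _ h0)]
    simp only [← pow_mul, ← pow_add]
    rw [← zpow_natCast, ← zpow_natCast, ← zpow_add₀ h0]
    congr 1
    push_cast [hik, hkN]
    ring
  rw [hz, show q^(k*(k+1)) = q^(k*k)*q^k by ring]
  have f1 := fa_ne hp k
  have f2 := fa_ne hp (2*k)
  have f3 := fa_ne hp i
  have f4 := fa_ne hp (L-k)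
  have f5 := fa_ne hp (n+j-k)
  have f6 := fa_ne hp (L+k+1)
  have f7 := fa_ne hp (n+j+k+1)
  have f8 := fa_ne hp (L+1)
  have f9 := one_sub_ne hp (2*k)
  have u1 := pow_ne_zero k (pow_ne_zero L hp0)
  have u2 := pow_ne_zero k (pow_ne_zero (n+j) hp0)
  have b1 : qp ((q^2)^(L+1+1)) (q^2) k = qp (q^2) (q^2) (L+k+1) / qp (q^2) (q^2) (L+1) := by
    rw [eq_div_iff f8]; linear_combination a1
  have b2 : qp ((q^2)^(2*k+1+1)) (q^2) (n+j-k) = qp (q^2) (q^2) (n+j+k+1) / (qp (q^2) (q^2) (2*k)*(1 - (q^2)^(2*k+1))) := by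
    rw [eq_div_iff (mul_ne_zero f2 f9)]; linear_combination a2
  have b3 : E (q^2) ((q^2)^L) k = q^(k*k) * qp (q^2) (q^2) L / (qp (q^2) (q^2) (L-k) * q^k) := by
    rw [eq_div_iff (mul_ne_zero f4 (pow_ne_zero _ h0))]; linear_combination a3
  have b4 : E (q^2) ((q^2)^(n+j)) k = q^(k*k) * qp (q^2) (q^2) (n+j) / (qp (q^2) (q^2) (n+j-k) * q^k) := by
    rw [eq_div_iff (mul_ne_zero f5 (pow_ne_zero _ h0))]; linear_combination a4
  rw [b1, b2, b3, b4]
  have s1 : ∀ c : ℂ, (-c⁻¹)^k = (-1)^k * (c^k)⁻¹ := fun c => by rw [neg_pow, inv_pow]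
  rw [s1, s1]
  have s2 : (-1:ℂ)^k * (-1)^k = 1 := by rw [← mul_pow]; simp
  clear a1 a2 a3 a4 b1 b2 b3 b4 hz s1
  have v1 := pow_ne_zero k h0
  have v2 := pow_ne_zero (k*k) h0
  generalize ((q^2)^L)^k = U1 at *
  generalize ((q^2)^(n+j))^k = U2 at *
  generalize q^k = V1 at *
  generalize q^(k*k) = V2 at *
  generalize 1 - (q^2)^(2*k+1) = G at *
  generalize (-1:ℂ)^k = e at *
  have e0 : e ≠ 0 := left_ne_zero_of_mul_eq_one s2
  generalize qp (q^2) (q^2) (n+j+k+1) = g1 at *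
  generalize qp (q^2) (q^2) (n+j-k) = g2 at *
  generalize qp (q^2) (q^2) (L+k+1) = g3 at *
  generalize qp (q^2) (q^2) (L-k) = g4 at *
  generalize qp (q^2) (q^2) (L+1) = g5 at *
  generalize qp (q^2) (q^2) (2*k) = g6 at *
  generalize qp (q^2) (q^2) (k+i) = g7 at *
  generalize qp (q^2) (q^2) k = g8 at *
  generalize qp (q^2) (q^2) i = g9 at *
  generalize q^((2*k+1)*(k-i)) = r1
  generalize q^(n+j-k) = r2
  have s3 : e ^ 2 = 1 := by rw [sq]; exact s2
  field_simp
  try rw [s3]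
  try ring

lemma evP_Pf {q : ℂ} (h0 : q ≠ 0) (hp : ∀ n : ℕ, 0 < n → (q^2) ^ n ≠ 1)
  {C : ℂ → ℂ → ℕ → Polynomial ℂ} (hC : IsUltra C) (x : ℂ) (L n : ℕ) (i j : Fin (L+1)) :
    evP q L C n x i j = Pf q x L C n i j := by
  have hp0 : q^2 ≠ 0 := pow_ne_zero _ h0
  unfold evP Pm Pf
  rw [Matrix.map_apply, Matrix.of_apply, Polynomial.eval_finsetSum]
  have hi := i.2
  have hj := j.2
  generalize (i:ℕ) = i at *
  generalize (j:ℕ) = j at *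
  have hs : ∑ k ∈ Finset.range (L+1), ((1 - (q^2)^(2*k+1)) * Mf q x C k i * hk q L k) *
    (F (q^2) L k n j * Lf q x C (n+j) k) = ∑ k ∈ Finset.Icc i (min L (n+j)), ((1 - (q^2)^(2*k+1)) * Mf q x C k i * hk q L k) *
    (F (q^2) L k n j * Lf q x C (n+j) k) := by
    symm
    apply Finset.sum_subset
    · intro a; simp; omega
    · intro a h1 h2
      by_cases h : a < i
      · rw [Mf_van h0 hp hC x h]; ring
      · rw [Lf_van h0 hp hC x (show n + j < a by simp at h1 h2; omega)]; ring
  rw [hs]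
  refine Finset.sum_congr rfl fun k hk' => ?_
  have hk' : i ≤ k ∧ k ≤ L ∧ k ≤ n + j := by simp at hk'; omega
  obtain ⟨k1, k2, k3⟩ := hk'
  unfold Mf Lf
  rw [if_pos k1, if_pos k3]
  have zn : ∀ a : ℕ, ∀ b : ℤ, b = -(2*(a:ℤ)) → q^b = ((q^2)^a)⁻¹ := by
    rintro a b rfl
    rw [_root_.zpow_neg, ← pow_mul, ← zpow_natCast]; norm_cast
  have zp : ∀ a : ℕ, ∀ b : ℤ, b = 2*(a:ℤ) → q^b = (q^2)^a := by
    rintro a b rfl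
    rw [← pow_mul, ← zpow_natCast]; norm_cast
  rw [← ne_term h0 hp k1 k2 k3, ← racah_F hp0 hp k2 k3]
  rw [Polynomial.eval_mul, Polynomial.eval_C, Polynomial.eval_mul]
  rw [zn L _ rfl, zn (n+j) (-(2 * (j:ℤ) + 2 * (n : ℤ))) (by push_cast; ring), zp (L+1+1) (2 * (L : ℤ) + 4) (by push_cast; ring), zp (2*k+1+1) (4 * (k : ℤ) + 4) (by push_cast; ring),
    zn (n+j+1) (-(2 * (n : ℤ) + 2 * (j:ℤ) + 2)) (by push_cast; ring), zn (L+1) (-(2 * (L : ℤ) + 2)) (by push_cast; ring), zn k _ rfl, zp (k+1) (2 * (k : ℤ) + 2) (by push_cast; ring)]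
  rw [_root_.zpow_neg (q^2), zpow_natCast]

lemma J_mul_apply (L : ℕ) (A : Matrix (Fin (L+1)) (Fin (L+1)) ℂ) (i j : Fin (L+1)) :
    (Jm L * A) i j = A i.rev j := by
  rw [Matrix.mul_apply, Finset.sum_eq_single i.rev]
  · simp [Jm, Fin.val_rev]
    intro h; have := i.2; omega
  · intro b _ hb
    simp only [Jm, Matrix.of_apply]
    rw [if_neg, zero_mul]
    intro h; apply hb; ext; simp [Fin.val_rev]; omega
  · simp

lemma mul_J_apply (L : ℕ) (A : Matrix (Fin (L+1)) (Fin (L+1)) ℂ) (i j : Fin (L+1)) :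
    (A * Jm L) i j = A i j.rev := by
  rw [Matrix.mul_apply, Finset.sum_eq_single j.rev]
  · simp [Jm, Fin.val_rev]
    intro h; have := j.2; omega
  · intro b _ hb
    simp only [Jm, Matrix.of_apply]
    rw [if_neg, mul_zero]
    intro h; apply hb; ext; simp [Fin.val_rev]; omega
  · simp

lemma JPJ {q : ℂ} (h0 : q ≠ 0) (hp : ∀ n : ℕ, 0 < n → (q^2) ^ n ≠ 1)
  {C : ℂ → ℂ → ℕ → Polynomial ℂ} (hC : IsUltra C) (x : ℂ) (L n : ℕ) :
    Jm L * evP q L C n x * Jm L = evP q L C n x := by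
  ext i j
  rw [mul_J_apply, J_mul_apply, evP_Pf h0 hp hC, evP_Pf h0 hp hC]
  rw [Fin.val_rev, Fin.val_rev, show L + 1 - ((i:ℕ)+1) = L - i by omega, show L + 1 - ((j:ℕ)+1) = L - j by omega]
  exact Pf_symm h0 hp hC x n (by have := i.2; omega) (by have := j.2; omega)
end QX

namespace QX

def Aw (q : ℂ) (L m n t : ℕ) : ℂ :=
  if m + n ≤ L + t then
    (-1)^(m+n) * q ^ (2*((t:ℤ)-m)*(t-n)+m+n-2*t-L) * ((1 - (q^2)^(L+1)) * qp (q^2) (q^2) (L+1) / qp (q^2) (q^2) L)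
     * (qp (q^2) (q^2) m * qp (q^2) (q^2) n * (qp (q^2) (q^2) (L-m) * qp (q^2) (q^2) (L-n)))
     / ((qp (q^2) (q^2) t * qp (q^2) (q^2) (m+n+1-t)) * (qp (q^2) (q^2) (L+1-t) * qp (q^2) (q^2) (L+t-m-n)))
  else 0

lemma Aw_comm (q : ℂ) (L m n t : ℕ) : Aw q L m n t = Aw q L n m t := by
  unfold Aw
  rw [add_comm m n, show L+t-m-n = L+t-n-m by omega,
    show 2*((t:ℤ)-m)*(t-n)+m+n-2*t-L = 2*((t:ℤ)-n)*(t-m)+n+m-2*t-L by ring]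
  split_ifs
  · ring
  · rfl

lemma alpha_eq {q : ℂ} (h0 : q ≠ 0) (hp : ∀ n : ℕ, 0 < n → (q^2) ^ n ≠ 1) {L m n t : ℕ}
    (hmn : m ≤ n) (hn : n ≤ L) (ht : t ≤ n) : alphaC q L m n t = Aw q L m n t := by
  have hp0 : q^2 ≠ 0 := pow_ne_zero _ h0
  have zp : ∀ a : ℕ, ∀ b : ℤ, b = 2*(a:ℤ) → q^b = (q^2)^a := by
    rintro a b rfl
    rw [← pow_mul, ← zpow_natCast]; norm_cast
  have zn : ∀ a : ℕ, ∀ b : ℤ, b = -(2*(a:ℤ)) → q^b = ((q^2)^a)⁻¹ := by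
    rintro a b rfl
    rw [_root_.zpow_neg, ← pow_mul, ← zpow_natCast]; norm_cast
  unfold alphaC Aw
  rw [zn (L-m) (2 * (m : ℤ) - 2 * (L : ℤ)) (by push_cast [hmn.trans hn]; ring),
    zp (m+1+1) (2 * (m : ℤ) + 4) (by push_cast; ring), zp (L+1-t+1) (2 * (L : ℤ) + 4 - 2 * (t : ℤ)) (by
      rw [Nat.cast_add, Nat.cast_sub (by omega)]; push_cast; ring),
    zp (L+1) (2 * (L : ℤ) + 2) (by push_cast; ring), zp (m+1) (2 * (m : ℤ) + 2) (by push_cast; ring)]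
  rw [qp_inv (pow_ne_zero _ hp0)]
  split_ifs with hc
  · have a1 := qp_fa (q^2) (m+1) (n-t)
    have a2 := qp_fa (q^2) (L+1-t) t
    have a3 := E_fa q (a := L - m) (n-t) (by omega)
    rw [show m+1+(n-t) = m+n+1-t by omega, fa_succ _ m] at a1
    rw [show L+1-t+t = L+1 by omega] at a2
    rw [show L-m-(n-t) = L+t-m-n by omega] at a3
    have f1 := fa_ne hp m
    have f2 := one_sub_ne hp m
    have f3 := fa_ne hp (L+1-t)
    have f4 := fa_ne hp (L+t-m-n)
    have f5 := fa_ne hp (m+n+1-t)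
    have f6 := fa_ne hp t
    have f7 := fa_ne hp L
    have b1 : qp ((q^2)^(m+1+1)) (q^2) (n-t) = qp (q^2) (q^2) (m+n+1-t) / (qp (q^2) (q^2) m*(1 - (q^2)^(m+1))) := by
      rw [eq_div_iff (mul_ne_zero f1 f2)]; linear_combination a1
    have b2 : qp ((q^2)^(L+1-t+1)) (q^2) t = qp (q^2) (q^2) (L+1) / qp (q^2) (q^2) (L+1-t) := by
      rw [eq_div_iff f3]; linear_combination a2
    have b3 : E (q^2) ((q^2)^(L-m)) (n-t) = q^((n-t)*(n-t)) * qp (q^2) (q^2) (L-m) / (qp (q^2) (q^2) (L+t-m-n) * q^(n-t)) := by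
      rw [eq_div_iff (mul_ne_zero f4 (pow_ne_zero _ h0))]; linear_combination a3
    rw [b1, b2, b3]
    have s1 : (-((q^2)^(L-m))⁻¹)^(n-t) = (-1)^(n-t) * (q^(2*(L-m)*(n-t)))⁻¹ := by
      rw [neg_pow, inv_pow, ← pow_mul, ← pow_mul]; ring_nf
    have s2 : (-1:ℂ)^((m:ℤ)-t) * (-1)^(n-t) = (-1)^(m+n) := by
      rw [← zpow_natCast, ← zpow_natCast, ← zpow_add₀ (by norm_num)]
      push_cast [ht]
      rw [show (m:ℤ)-t+(n-t) = m+n - 2*t by ring, zpow_sub₀ (by norm_num), _root_.zpow_mul]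
      simp
    rw [s1]
    have s3 : q ^ (2*((t:ℤ)-m)*(t-n)+m+n-2*t-L) = q ^ (2 * (n : ℤ) * ((L : ℤ) + 1) - (n : ℤ) ^ 2 - (2 * (L : ℤ) + 3) * (t : ℤ) + (t : ℤ) ^ 2 -
      (L : ℤ) + (m : ℤ)) * q^((n-t)*(n-t)) / (q^(2*(L-m)*(n-t)) * q^(n-t)) := by
      rw [eq_div_iff (mul_ne_zero (pow_ne_zero _ h0) (pow_ne_zero _ h0)), ← pow_add, ← zpow_natCast, ← zpow_natCast,
        ← zpow_add₀ h0, ← zpow_add₀ h0]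
      congr 1
      push_cast [ht, hmn.trans hn]
      ring
    rw [s3, ← s2]
    have v1 := pow_ne_zero (2*(L-m)*(n-t)) h0
    have v2 := pow_ne_zero (n-t) h0
    generalize q^(2*(L-m)*(n-t)) = V1 at *
    generalize q^(n-t) = V2 at *
    generalize 1 - (q^2)^(m+1) = G at *
    generalize 1 - (q^2)^(L+1) = G' at *
    field_simp
  · rw [E_van _ (by omega)]; simp

lemma Aw_flip (q : ℂ) {L m n t : ℕ} (hmn : m ≤ n) (hn : n ≤ L) (ht : t ≤ n) (hm : m + 1 ≤ t) :
    Aw q L m n (m+n+1-t) = Aw q L m n t := by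
  unfold Aw
  rw [if_pos (by omega), if_pos (by omega), show m+n+1-(m+n+1-t) = t by omega,
    show L+1-(m+n+1-t) = L+t-m-n by omega, show L+(m+n+1-t)-m-n = L+1-t by omega,
    mul_comm (qp (q^2) (q^2) t), mul_comm (qp (q^2) (q^2) (L+1-t))]
  congr 5
  rw [Nat.cast_sub (by omega)]; push_cast; ring

lemma Aw_rev (q : ℂ) {L m n t : ℕ} (hm : m ≤ L) (hn : n ≤ L) (ht : t ≤ m) (ht' : t ≤ n)
    (h : m + n ≤ L + t) :
    Aw q L (L-m) (L-n) (L+t-m-n) = Aw q L m n t := by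
  unfold Aw
  rw [if_pos (by omega), if_pos (by omega), show L-m+(L-n)+1-(L+t-m-n) = L+1-t by omega,
    show L+1-(L+t-m-n) = m+n+1-t by omega, show L+(L+t-m-n)-(L-m)-(L-n) = t by omega,
    show L-(L-m) = m by omega, show L-(L-n) = n by omega]
  have e1 : (-1:ℂ)^(L-m+(L-n)) = (-1)^(m+n) := by
    rw [neg_one_pow_congr]
    rw [Nat.even_iff, Nat.even_iff]; omega
  have e2 : (2*(((L+t-m-n : ℕ):ℤ)-(L-m:ℕ))*((L+t-m-n : ℕ)-(L-n:ℕ))+(L-m:ℕ)+(L-n:ℕ)-2*(L+t-m-n:ℕ)-L)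
      = 2*((t:ℤ)-m)*(t-n)+m+n-2*t-L := by
    rw [Nat.cast_sub (show n ≤ L+t-m by omega), Nat.cast_sub (show m ≤ L+t by omega), Nat.cast_sub hm, Nat.cast_sub hn]
    push_cast; ring
  rw [e1, e2]
  congr 1 <;> ring

def Wp (q : ℂ) (L m n : ℕ) : Polynomial ℂ :=
  ∑ t ∈ Finset.range (min m n + 1), Polynomial.C (Aw q L m n t) * Polynomial.Chebyshev.U ℂ ((m:ℤ)+n-2*t)

lemma Wp_comm (q : ℂ) (L m n : ℕ) : Wp q L m n = Wp q L n m := by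
  unfold Wp
  rw [min_comm, add_comm (m:ℤ)]
  exact Finset.sum_congr rfl fun t _ => by rw [Aw_comm]

lemma Wp_rev (q : ℂ) {L m n : ℕ} (hm : m ≤ L) (hn : n ≤ L) :
    Wp q L (L-m) (L-n) = Wp q L m n := by
  have aux : ∀ m n : ℕ, Wp q L m n = ∑ t ∈ (Finset.range (min m n + 1)).filter (fun t => m + n ≤ L + t),
     Polynomial.C (Aw q L m n t) * Polynomial.Chebyshev.U ℂ ((m:ℤ)+n-2*t) := by
    intro m n
    rw [Finset.sum_filter]
    refine Finset.sum_congr rfl fun t _ => ?_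
    split_ifs with h
    · rfl
    · simp [Aw, h]
  rw [aux, aux]
  refine Finset.sum_nbij' (fun t => t + m + n - L) (fun t => L+t-m-n) ?_ ?_ ?_ ?_ ?_
  · intro t; simp; omega
  · intro t; simp; omega
  · intro t; simp; omega
  · intro t; simp; omega
  · intro t ht
    have h1 : t ≤ L - m ∧ t ≤ L - n ∧ L-m+(L-n) ≤ L+t := by simp at ht; omega
    obtain ⟨h1, h2, h3⟩ := h1
    rw [← Aw_rev q hm hn (t := t+m+n-L) (by omega) (by omega) (by omega),
      show L+(t+m+n-L)-m-n = t by omega]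
    congr 2
    push_cast [hm, hn, show L ≤ t+m+n by omega]
    ring

lemma W_tail (f : ℕ → ℂ) (g : ℤ → ℂ) (hg : ∀ k, g (-k-2) = - g k) {m n : ℕ} (hmn : m ≤ n)
    (hf : ∀ t, m+1 ≤ t → t ≤ n → f (m+n+1-t) = f t) :
    ∑ t ∈ Finset.range (n+1), f t * g ((m:ℤ)+n-2*t) = ∑ t ∈ Finset.range (m+1), f t * g ((m:ℤ)+n-2*t) := by
  rw [← Finset.sum_range_add_sum_Ico _ (show m+1 ≤ n+1 by omega)]
  have hz : ∑ t ∈ Finset.Ico (m+1) (n+1), f t * g ((m:ℤ)+n-2*t) = -∑ t ∈ Finset.Ico (m+1) (n+1), f t * g ((m:ℤ)+n-2*t) := by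
    have hr := Finset.sum_Ico_reflect (fun t : ℕ => f t * g ((m:ℤ)+n-2*t)) (m+1) (show n+1 ≤ (m+n+1)+1 by omega)
    rw [show m+n+1+1-(n+1) = m+1 by omega, show m+n+1+1-(m+1) = n+1 by omega] at hr
    refine hr.symm.trans ?_
    rw [← Finset.sum_neg_distrib]
    refine Finset.sum_congr rfl fun t ht => ?_
    have ht : m+1 ≤ t ∧ t ≤ n := by simp at ht; omega
    rw [hf t ht.1 ht.2, ← mul_neg, ← hg]
    congr 2
    rw [Nat.cast_sub (by omega)]; push_cast; ring
  have : ∑ t ∈ Finset.Ico (m+1) (n+1), f t * g ((m:ℤ)+n-2*t) = 0 := by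
    linear_combination (1/2) * hz
  rw [this, add_zero]

lemma Wm_eq {q : ℂ} (h0 : q ≠ 0) (hp : ∀ n : ℕ, 0 < n → (q^2) ^ n ≠ 1) (L : ℕ) (x : ℂ)
    (i j : Fin (L+1)) : Wm q L x i j = (Wp q L i j).eval x := by
  have main : ∀ m n : ℕ, m ≤ n → n ≤ L → ∑ t ∈ Finset.range (n + 1),
      alphaC q L m n t * (Polynomial.Chebyshev.U ℂ ((m : ℤ) + (n : ℤ) - 2 * (t : ℤ))).eval x = (Wp q L m n).eval x := by
    intro m n hmn hn
    have e1 : ∑ t ∈ Finset.range (n + 1),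
      alphaC q L m n t * (Polynomial.Chebyshev.U ℂ ((m : ℤ) + (n : ℤ) - 2 * (t : ℤ))).eval x
      = ∑ t ∈ Finset.range (n + 1),
      Aw q L m n t * (Polynomial.Chebyshev.U ℂ ((m : ℤ) + (n : ℤ) - 2 * (t : ℤ))).eval x := 
      Finset.sum_congr rfl fun t ht => by rw [alpha_eq h0 hp hmn hn (by simp at ht; omega)]
    rw [e1, W_tail (fun t => Aw q L m n t) (fun k => (Polynomial.Chebyshev.U ℂ k).eval x) _ hmn
      (fun t h1 h2 => Aw_flip q hmn hn h2 h1)]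
    · unfold Wp
      rw [Polynomial.eval_finsetSum, min_eq_left hmn]
      exact Finset.sum_congr rfl fun t _ => by simp
    · intro k
      simp [Polynomial.Chebyshev.U_neg_sub_two]
  unfold Wm
  rw [Matrix.of_apply]
  have hi := i.2
  have hj := j.2
  rcases le_total (i:ℕ) (j:ℕ) with h | h
  · rw [← main _ _ h (by omega)]
    simp only [max_eq_right h, min_eq_left h]
    refine Finset.sum_congr rfl fun t _ => ?_
    congr 3
    rw [min_eq_left (by exact_mod_cast h), max_eq_right (by exact_mod_cast h)]
  · rw [Wp_comm, ← main _ _ h (by omega)]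
    simp only [max_eq_left h, min_eq_right h]
    refine Finset.sum_congr rfl fun t _ => ?_
    congr 3
    rw [min_eq_right (by exact_mod_cast h), max_eq_left (by exact_mod_cast h)]
end QX

namespace QX

lemma U_coeff (n : ℕ) : (∀ d, n < d → (Polynomial.Chebyshev.U ℂ (n:ℤ)).coeff d = 0) ∧
    (Polynomial.Chebyshev.U ℂ (n:ℤ)).coeff n = 2^n ∧
    (∀ d, d + 1 = n → (Polynomial.Chebyshev.U ℂ (n:ℤ)).coeff d = 0) := by
  induction n using Nat.strong_induction_on with
  | _ n ih =>
    match n with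
    | 0 =>
      refine ⟨fun d hd => ?_, ?_, fun d hd => by omega⟩
      · simp [Polynomial.coeff_one]; omega
      · simp
    | 1 =>
      refine ⟨fun d hd => ?_, ?_, fun d hd => ?_⟩
      · simp only [Nat.cast_one, Polynomial.Chebyshev.U_one]
        rw [show (2:Polynomial ℂ) = Polynomial.C 2 from rfl, Polynomial.coeff_C_mul, Polynomial.coeff_X, if_neg (by omega), mul_zero]
      · simp only [Nat.cast_one, Polynomial.Chebyshev.U_one]
        rw [show (2:Polynomial ℂ) = Polynomial.C 2 from rfl, Polynomial.coeff_C_mul, Polynomial.coeff_X]; simp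
      · simp only [Nat.cast_one, Polynomial.Chebyshev.U_one]
        rw [show (2:Polynomial ℂ) = Polynomial.C 2 from rfl, Polynomial.coeff_C_mul, Polynomial.coeff_X, if_neg (by omega), mul_zero]
    | n+2 =>
      obtain ⟨a1, a2, a3⟩ := ih n (by omega)
      obtain ⟨b1, b2, b3⟩ := ih (n+1) (by omega)
      have hrec : ∀ d, (Polynomial.Chebyshev.U ℂ ((n+2:ℕ):ℤ)).coeff (d+1) =
          2 * (Polynomial.Chebyshev.U ℂ ((n+1:ℕ):ℤ)).coeff d - (Polynomial.Chebyshev.U ℂ (n:ℤ)).coeff (d+1) := by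
        intro d
        rw [show ((n+2:ℕ):ℤ) = (n:ℤ)+2 by push_cast; ring, Polynomial.Chebyshev.U_add_two,
          show (2:Polynomial ℂ) = Polynomial.C 2 from rfl, mul_assoc, Polynomial.coeff_sub,
          Polynomial.coeff_C_mul, Polynomial.coeff_X_mul]
        push_cast; rfl
      refine ⟨fun d hd => ?_, ?_, fun d hd => ?_⟩
      · obtain ⟨d, rfl⟩ : ∃ e, d = e+1 := ⟨d-1, by omega⟩
        rw [hrec, a1 _ (by omega), b1 _ (by omega)]; simp
      · rw [hrec, a1 _ (by omega), b2]; ring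
      · obtain rfl : d = n+1 := by omega
        rw [hrec, a1 _ (by omega), b3 _ (by omega)]; simp

lemma Wp_term (q : ℂ) {L m n t : ℕ} (ht : t ≤ min m n) (d : ℕ) :
    (Polynomial.C (Aw q L m n t) * Polynomial.Chebyshev.U ℂ ((m:ℤ)+n-2*t)).coeff d
     = Aw q L m n t * (Polynomial.Chebyshev.U ℂ ((m+n-2*t:ℕ):ℤ)).coeff d := by
  rw [Polynomial.coeff_C_mul, Nat.cast_sub (by omega)]; push_cast; rfl

lemma Aw_zero (q : ℂ) {L m n t : ℕ} (h : L + t < m + n) : Aw q L m n t = 0 := by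
  unfold Aw; rw [if_neg (by omega)]

/-- coefficient of top degree -/
lemma Wp_coeff_top (q : ℂ) (L m n : ℕ) :
    (Wp q L m n).coeff L = if m + n = L then 2^L * Aw q L m n 0 else 0 := by
  unfold Wp
  rw [Polynomial.finsetSum_coeff, Finset.sum_eq_single 0]
  · rw [Wp_term q (by omega)]
    split_ifs with h
    · subst h
      rw [Nat.mul_zero, Nat.sub_zero, (U_coeff _).2.1]; ring
    · rcases lt_or_gt_of_ne h with h | h
      · rw [(U_coeff _).1 _ (by omega), mul_zero]
      · rw [Aw_zero q (by omega), zero_mul]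
  · intro t ht h
    simp only [Finset.mem_range] at ht
    rw [Wp_term q (by omega)]
    by_cases hc : L + t < m + n
    · rw [Aw_zero q hc, zero_mul]
    · rw [(U_coeff _).1 _ (by omega), mul_zero]
  · simp

lemma Wp_coeff_sub (q : ℂ) (d m n : ℕ) (h : m + n ≤ d) :
    (Wp q (d+1) m n).coeff d = if m + n = d then 2^d * Aw q (d+1) m n 0 else 0 := by
  unfold Wp
  rw [Polynomial.finsetSum_coeff, Finset.sum_eq_single 0]
  · rw [Wp_term q (by omega)]
    split_ifs with h
    · subst h
      rw [Nat.mul_zero, Nat.sub_zero, (U_coeff _).2.1]; ring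
    · rw [(U_coeff _).1 _ (by omega), mul_zero]
  · intro t ht h
    simp only [Finset.mem_range] at ht
    rw [Wp_term q (by omega)]
    rw [(U_coeff _).1 _ (by omega), mul_zero]
  · simp

/-- vanishing above the band -/
lemma Wp_coeff_sub' (q : ℂ) (d m n : ℕ) (h : m + n ≠ d) (h' : m + n ≠ d + 2) :
    (Wp q (d+1) m n).coeff d = 0 := by
  unfold Wp
  rw [Polynomial.finsetSum_coeff]
  refine Finset.sum_eq_zero fun t ht => ?_
  simp only [Finset.mem_range] at ht
  rw [Wp_term q (by omega)]
  by_cases hc : d + 1 + t < m + n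
  · rw [Aw_zero q hc, zero_mul]
  · by_cases h1 : m + n - 2*t < d
    · rw [(U_coeff _).1 _ h1, mul_zero]
    · rw [(U_coeff _).2.2 _ (by omega), mul_zero]

lemma Aw_ne {q : ℂ} (h0 : q ≠ 0) (hp : ∀ n : ℕ, 0 < n → (q^2) ^ n ≠ 1) {L m n t : ℕ}
    (h : m + n ≤ L + t) : Aw q L m n t ≠ 0 := by
  unfold Aw
  rw [if_pos h]
  have f := fa_ne hp
  have g := one_sub_ne hp L
  refine div_ne_zero ?_ (by simp [f])
  refine mul_ne_zero (mul_ne_zero (mul_ne_zero ?_ (zpow_ne_zero _ h0)) ?_) (by simp [f])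
  · exact pow_ne_zero _ (by norm_num)
  · exact div_ne_zero (mul_ne_zero g (f _)) (f _)

def Fr (q : ℝ) (n : ℕ) : ℝ := ∏ j ∈ Finset.range n, (1 - (q^2)^(j+1))

lemma Fr_fac_pos {q : ℝ} (hq0 : 0 < q) (hq1 : q < 1) (j : ℕ) : 0 < 1 - (q^2)^(j+1) := by
  have : (q^2)^(j+1) < 1 := pow_lt_one₀ (by positivity) (by nlinarith) (by omega)
  linarith

lemma Fr_pos {q : ℝ} (hq0 : 0 < q) (hq1 : q < 1) (n : ℕ) : 0 < Fr q n :=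
  Finset.prod_pos fun j _ => Fr_fac_pos hq0 hq1 j

lemma Fr_mul_le {q : ℝ} (hq0 : 0 < q) (hq1 : q < 1) (n m : ℕ) : Fr q n * Fr q m ≤ Fr q (n+m) := by
  unfold Fr
  rw [Finset.prod_range_add]
  refine mul_le_mul_of_nonneg_left ?_ (Fr_pos hq0 hq1 n).le
  refine Finset.prod_le_prod (fun j _ => (Fr_fac_pos hq0 hq1 j).le) fun j _ => ?_
  have : (q^2)^(n+j+1) ≤ (q^2)^(j+1) := pow_le_pow_of_le_one (by positivity) (by nlinarith) (by omega)
  linarith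

lemma Fr_cast (q : ℝ) (n : ℕ) : qp ((q:ℂ)^2) ((q:ℂ)^2) n = ((Fr q n : ℝ) : ℂ) := by
  induction n with
  | zero => simp [Fr, qp_zero]
  | succ n ih =>
    rw [fa_succ, ih]; unfold Fr
    rw [Finset.prod_range_succ]; push_cast; ring

def Br (q : ℝ) (L i : ℕ) : ℝ := q^(2*(i*(L-i))) * (Fr q i * Fr q (L-i))^2

lemma Br_pos {q : ℝ} (hq0 : 0 < q) (hq1 : q < 1) (L i : ℕ) : 0 < Br q L i := by
  have := Fr_pos hq0 hq1
  have h1 := this i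
  have h2 := this (L-i)
  unfold Br; positivity

lemma Br_rev (q : ℝ) {L i : ℕ} (h : i ≤ L) : Br q L (L-i) = Br q L i := by
  unfold Br
  rw [show L-(L-i) = i by omega, mul_comm (L-i), mul_comm (Fr q (L-i))]

lemma Br_lt {q : ℝ} (hq0 : 0 < q) (hq1 : q < 1) {L i : ℕ} (h0 : 0 < i) (hi : i < L) : Br q L i < Br q L 0 := by
  have h1 := Fr_mul_le hq0 hq1 i (L-i)
  rw [show i+(L-i) = L by omega] at h1
  have a := Fr_pos hq0 hq1 i
  have b := Fr_pos hq0 hq1 (L-i)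
  have e : Br q L 0 = (Fr q L)^2 := by unfold Br; simp [Fr]
  rw [e]
  unfold Br
  have hlt : q^(2*(i*(L-i))) < 1 := by
    refine pow_lt_one₀ hq0.le hq1 ?_
    have : 0 < i*(L-i) := Nat.mul_pos h0 (by omega)
    omega
  have h2 : (Fr q i * Fr q (L-i))^2 ≤ (Fr q L)^2 := by gcongr
  have h3 : 0 < (Fr q i * Fr q (L-i))^2 := by positivity
  nlinarith

lemma Aw_Br {q : ℝ} (L i : ℕ) (hi : i ≤ L) :
    Aw (q:ℂ) L i (L-i) 0 = ((-1)^L * ((1 - ((q:ℂ)^2)^(L+1)) * qp ((q:ℂ)^2) ((q:ℂ)^2) (L+1) / qp ((q:ℂ)^2) ((q:ℂ)^2) L)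
      / (qp ((q:ℂ)^2) ((q:ℂ)^2) (L+1) * qp ((q:ℂ)^2) ((q:ℂ)^2) (L+1))) * ((Br q L i : ℝ) : ℂ) := by
  unfold Aw
  rw [if_pos (by omega), show i+(L-i) = L by omega, show L+1-0 = L+1 by omega, show L+0-i-(L-i) = 0 by omega,
    show L-(L-i) = i by omega, qp_zero]
  have : (2*(((0:ℕ):ℤ)-i)*((0:ℕ)-(L-i:ℕ))+i+(L-i:ℕ)-2*(0:ℕ)-L) = ((2*(i*(L-i)) : ℕ) : ℤ) := by
    push_cast [hi]; ring
  rw [this, zpow_natCast]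
  unfold Br
  push_cast
  rw [← Fr_cast, ← Fr_cast]
  ring

/-- abstract commutant lemma -/
lemma commutant {L : ℕ} (hL : 0 < L) (a : Fin (L+1) → ℂ) (ha : ∀ i, a i ≠ 0)
    (har : ∀ i, a i.rev = a i) (ha0 : ∀ i : Fin (L+1), 0 < (i:ℕ) → (i:ℕ) < L → a i ≠ a 0)
    (hsq : ∀ i j, a i ^ 2 = a j ^ 2 → a i = a j)
    (A B Y : Matrix (Fin (L+1)) (Fin (L+1)) ℂ)
    (hA : ∀ i j, A i j = if j = i.rev then a i else 0)
    (hB : ∀ i j : Fin (L+1), (i:ℕ) + j + 1 ≠ L → (i:ℕ) + j ≠ L + 1 → B i j = 0)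
    (hBn : ∀ i j : Fin (L+1), (i:ℕ) + j + 1 = L → B i j ≠ 0)
    (hBr : ∀ i j, B i.rev j.rev = B i j)
    (hYA : Y * A = A * Y) (hYB : Y * B = B * Y) :
    ∃ c d : ℂ, Y = c • (1 : Matrix (Fin (L+1)) (Fin (L+1)) ℂ) + d • Jm L := by
  have e : ∀ i j, Y i j.rev * a j = a i * Y i.rev j := by
    intro i j
    have := congrFun (congrFun hYA i) j
    rw [Matrix.mul_apply, Matrix.mul_apply, Finset.sum_eq_single j.rev, Finset.sum_eq_single i.rev] at this
    · simpa [hA, har] using this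
    · intro k _ hk; rw [hA, if_neg hk, zero_mul]
    · simp
    · intro k _ hk; rw [hA, if_neg (by rintro rfl; simp at hk), mul_zero]
    · simp
  have e2 : ∀ i j, Y i j * (a j)^2 = (a i)^2 * Y i j := by
    intro i j
    have h1 := e i j.rev
    have h2 := e i.rev j
    simp only [Fin.rev_rev, har] at h1 h2
    linear_combination (a j) * h1 + (a i) * h2
  have e3 : ∀ j : Fin (L+1), 0 < (j:ℕ) → (j:ℕ) < L → Y 0 j = 0 := by
    intro j h1 h2
    have := e2 0 j
    have h3 := ha0 j h1 h2
    by_contra h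
    apply h3
    apply hsq
    apply mul_left_cancel₀ h
    linear_combination this
  have e4 : ∀ i j, Y i.rev j.rev = Y i j := by
    intro i j
    have h1 := e i.rev j
    have h2 := e2 i j
    simp only [Fin.rev_rev, har] at h1
    by_cases hz : Y i j = 0
    · rw [hz, mul_zero] at h1
      rw [hz]; exact (mul_eq_zero.1 h1).resolve_right (ha j)
    · have h3 : a i = a j := by
        apply hsq
        apply mul_left_cancel₀ hz
        linear_combination -h2
      apply mul_right_cancel₀ (ha j)
      rw [h1, h3, mul_comm]
  refine ⟨Y 0 0, Y 0 (Fin.last L), ?_⟩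
  have hJB : Jm L * B = B * Jm L := by
    ext i j
    rw [J_mul_apply, mul_J_apply, ← hBr i j.rev, Fin.rev_rev]
  obtain ⟨Z, hZ⟩ : ∃ Z, Z = Y - (Y 0 0 • (1 : Matrix (Fin (L+1)) (Fin (L+1)) ℂ) + Y 0 (Fin.last L) • Jm L) := ⟨_, rfl⟩
  have hJ1 : ∀ i j, Jm L i j = (1 : Matrix (Fin (L+1)) (Fin (L+1)) ℂ) i.rev j := by
    intro i j
    have := J_mul_apply L 1 i j
    rwa [Matrix.mul_one] at this
  have hZB : Z * B = B * Z := by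
    rw [hZ, Matrix.sub_mul, Matrix.mul_sub, Matrix.add_mul, Matrix.mul_add, hYB]
    simp only [Matrix.smul_mul, Matrix.mul_smul, Matrix.one_mul, Matrix.mul_one, hJB]
  have hZr : ∀ i j, Z i.rev j.rev = Z i j := by
    intro i j
    rw [hZ]
    simp only [Matrix.sub_apply, Matrix.add_apply, Matrix.smul_apply, e4, hJ1, Matrix.one_apply, Fin.rev_inj]
  have hZ0 : ∀ j, Z 0 j = 0 := by
    intro j
    rw [hZ]
    simp only [Matrix.sub_apply, Matrix.add_apply, Matrix.smul_apply, hJ1, Matrix.one_apply, Fin.rev_zero, smul_eq_mul]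
    by_cases h1 : j = 0
    · subst h1
      have h2 : ¬ Fin.last L = 0 := by
        intro h; have := congrArg Fin.val h; simp at this; omega
      simp [h2]
    · by_cases h2 : j = Fin.last L
      · subst h2
        rw [if_neg (fun h => h1 h.symm)]; simp
      · rw [if_neg (fun h => h1 h.symm), if_neg (fun h => h2 h.symm), e3 j]
        · simp
        · rcases Nat.eq_zero_or_pos (j:ℕ) with h | h
          · exact absurd (Fin.ext h) h1
          · exact h
        · have := j.2
          have : (j:ℕ) ≠ L := fun h => h2 (Fin.ext h)
          omega
  have key : ∀ r : ℕ, ∀ i : Fin (L+1), (i:ℕ) ≤ r → ∀ j, Z i j = 0 := by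
    intro r
    induction r with
    | zero =>
      intro i hi j
      obtain rfl : i = 0 := Fin.ext (by simpa using hi)
      exact hZ0 j
    | succ r ih =>
      intro i hi j
      by_cases hir : (i:ℕ) ≤ r
      · exact ih i hir j
      have hi' : (i:ℕ) = r+1 := by omega
      have hiL := i.2
      have hrow : ∀ j, Z i.rev j = 0 := by
        intro j
        have hr : r < L + 1 := by omega
        have := congrFun (congrFun hZB ⟨r, hr⟩) j
        rw [Matrix.mul_apply, Matrix.mul_apply, Finset.sum_eq_zero (fun k _ => by
          rw [ih ⟨r, hr⟩ le_rfl k, zero_mul]), Finset.sum_eq_single i.rev] at this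
        · refine (mul_eq_zero.1 this.symm).resolve_left (hBn _ _ ?_)
          rw [Fin.val_rev]; simp only; omega
        · intro k _ hk
          by_cases h1 : r + (k:ℕ) = L + 1
          · have : Z k j = 0 := by
              rw [← hZr]
              apply ih
              rw [Fin.val_rev]; omega
            rw [this, mul_zero]
          · rw [hB _ _ _ h1, zero_mul]
            intro h2
            apply hk
            apply Fin.ext
            rw [Fin.val_rev]; simp only at h2; omega
        · simp
      rw [← hZr]; exact hrow _
  have : Z = 0 := by
    ext i j
    exact key L i (by have := i.2; omega) j
  rw [hZ] at this
  exact sub_eq_zero.1 this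

lemma coeff_comm {q : ℂ} (h0 : q ≠ 0) (hp : ∀ n : ℕ, 0 < n → (q^2) ^ n ≠ 1) (L : ℕ)
    (Y : Matrix (Fin (L+1)) (Fin (L+1)) ℂ)
    (h : ∀ x : ℝ, -1 < x → x < 1 → Y * Wm q L (x:ℂ) = Wm q L (x:ℂ) * Y) (d : ℕ) :
    Y * (Matrix.of fun i j : Fin (L+1) => (Wp q L i j).coeff d) = (Matrix.of fun i j : Fin (L+1) => (Wp q L i j).coeff d) * Y := by
  ext i j
  have hpoly : ∑ k : Fin (L+1), Polynomial.C (Y i k) * Wp q L k j = ∑ k : Fin (L+1), Wp q L i k * Polynomial.C (Y k j) := by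
    apply Polynomial.eq_of_infinite_eval_eq
    have hinf : (((fun x : ℝ => (x:ℂ)) '' Set.Ioo (-1:ℝ) 1)).Infinite := by
      apply Set.Infinite.image (Complex.ofReal_injective.injOn)
      exact Set.Ioo_infinite (by norm_num)
    refine hinf.mono ?_
    rintro _ ⟨x, hx, rfl⟩
    have := congrFun (congrFun (h x hx.1 hx.2) i) j
    rw [Matrix.mul_apply, Matrix.mul_apply] at this
    simp only [Wm_eq h0 hp] at this
    simp only [Set.mem_setOf_eq, Polynomial.eval_finsetSum, Polynomial.eval_mul, Polynomial.eval_C]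
    exact this
  have := congrArg (fun p => Polynomial.coeff p d) hpoly
  simp only [Polynomial.finsetSum_coeff, Polynomial.coeff_C_mul, Polynomial.coeff_mul_C] at this
  rw [Matrix.mul_apply, Matrix.mul_apply]
  exact this

lemma comm_iff {q : ℝ} (hq0 : 0 < q) (hq1 : q < 1) (h0 : (q:ℂ) ≠ 0) (hp : ∀ n : ℕ, 0 < n → ((q:ℂ)^2) ^ n ≠ 1) (L : ℕ)
    (Y : Matrix (Fin (L+1)) (Fin (L+1)) ℂ) :
    (∀ x : ℝ, -1 < x → x < 1 → Y * Wm (q:ℂ) L (x:ℂ) = Wm (q:ℂ) L (x:ℂ) * Y) ↔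
      ∃ a b : ℂ, Y = a • (1 : Matrix (Fin (L + 1)) (Fin (L + 1)) ℂ) + b • Jm L := by
  constructor
  · intro h
    rcases L with _ | d
    · refine ⟨Y 0 0, 0, ?_⟩
      ext i j
      obtain rfl : i = 0 := Fin.ext (by have := i.2; simp)
      obtain rfl : j = 0 := Fin.ext (by have := j.2; simp)
      simp
    · have hK : ∃ K : ℂ, ∀ i : ℕ, i ≤ d + 1 → 2^(d+1) * Aw (q:ℂ) (d+1) i (d+1-i) 0 = K * ((Br q (d+1) i : ℝ):ℂ) := by
        have hex : ∃ K : ℂ, ∀ i : ℕ, i ≤ d + 1 → Aw (q:ℂ) (d+1) i (d+1-i) 0 = K * ((Br q (d+1) i : ℝ):ℂ) :=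
          ⟨_, fun i hi => Aw_Br _ _ hi⟩
        obtain ⟨K, hK⟩ := hex
        refine ⟨2^(d+1) * K, fun i hi => ?_⟩
        rw [hK _ hi, ← mul_assoc]
      obtain ⟨K, hK⟩ := hK
      have hne : ∀ i : ℕ, i ≤ d + 1 → K * ((Br q (d+1) i : ℝ):ℂ) ≠ 0 := by
        intro i hi
        rw [← hK i hi]
        exact mul_ne_zero (pow_ne_zero _ (by norm_num)) (Aw_ne h0 hp (by omega))
      have hK0 : K ≠ 0 := left_ne_zero_of_mul (hne 0 (by omega))
      refine commutant (L := d+1) (by omega) (fun i => K * ((Br q (d+1) i : ℝ):ℂ)) (fun i => hne i (by have := i.2; omega))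
        ?_ ?_ ?_ _ _ Y ?_ ?_ ?_ ?_ (coeff_comm h0 hp (d+1) Y h (d+1)) (coeff_comm h0 hp (d+1) Y h d)
      · intro i
        have hi := i.2
        rw [Fin.val_rev, show d+1+1-((i:ℕ)+1) = d+1-i by omega, Br_rev q (by omega)]
      · intro i h1 h2 h3
        have h4 := mul_left_cancel₀ hK0 h3
        have h5 : Br q (d+1) i = Br q (d+1) 0 := by exact_mod_cast h4
        exact absurd h5 (Br_lt hq0 hq1 h1 h2).ne
      · intro i j hij
        simp only [mul_pow] at hij
        have h4 := mul_left_cancel₀ (pow_ne_zero 2 hK0) hij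
        have h5 : Br q (d+1) i ^ 2 = Br q (d+1) j ^ 2 := by exact_mod_cast h4
        have h6 := (pow_left_inj₀ (Br_pos hq0 hq1 (d+1) i).le (Br_pos hq0 hq1 (d+1) j).le (two_ne_zero)).1 h5
        simp only [h6]
      · intro i j
        have hi := i.2
        have hj := j.2
        rw [Matrix.of_apply, Wp_coeff_top]
        by_cases hij : j = i.rev
        · have h7 : (j:ℕ) = d+1-i := by rw [hij, Fin.val_rev]; omega
          rw [if_pos hij, if_pos (by omega), h7, hK _ (by omega)]
        · rw [if_neg hij, if_neg]
          intro h8; apply hij; apply Fin.ext; rw [Fin.val_rev]; omega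
      · intro i j h1 h2
        rw [Matrix.of_apply, Wp_coeff_sub' _ _ _ _ (by omega) (by omega)]
      · intro i j h1
        rw [Matrix.of_apply, Wp_coeff_sub _ _ _ _ (by omega), if_pos (by omega)]
        exact mul_ne_zero (pow_ne_zero _ (by norm_num)) (Aw_ne h0 hp (by omega))
      · intro i j
        have hi := i.2
        have hj := j.2
        rw [Matrix.of_apply, Matrix.of_apply, Fin.val_rev, Fin.val_rev, show d+1+1-((i:ℕ)+1) = d+1-i by omega,
          show d+1+1-((j:ℕ)+1) = d+1-j by omega, Wp_rev _ (by omega) (by omega)]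
  · rintro ⟨a, b, rfl⟩ x _ _
    have hJ : Jm L * Wm (q:ℂ) L (x:ℂ) = Wm (q:ℂ) L (x:ℂ) * Jm L := by
      ext i j
      have hi := i.2
      have hj := j.2
      rw [J_mul_apply, mul_J_apply, Wm_eq h0 hp, Wm_eq h0 hp, Fin.val_rev, Fin.val_rev,
        show L+1-((i:ℕ)+1) = L-i by omega, show L+1-((j:ℕ)+1) = L-j by omega,
        ← Wp_rev _ (show (i:ℕ) ≤ L by omega) (show L-(j:ℕ) ≤ L by omega), show L-(L-(j:ℕ)) = j by omega]
    simp only [Matrix.add_mul, Matrix.mul_add, Matrix.smul_mul, Matrix.mul_smul, Matrix.one_mul, Matrix.mul_one, hJ]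
end QX

/-- the commutant of `{W(x) : x ∈ (-1,1)}` is spanned by `I` and `J`,
and `J P_n(x) J = P_n(x)` for all `n` and `x`. -/
theorem stmt2 (q : ℝ) (hq0 : 0 < q) (hq1 : q < 1) (L : ℕ)
    (C : ℂ → ℂ → ℕ → Polynomial ℂ) (hC : IsUltra C) :
    (∀ Y : Matrix (Fin (L + 1)) (Fin (L + 1)) ℂ,
        (∀ x : ℝ, -1 < x → x < 1 →
            Y * Wm (q : ℂ) L (x : ℂ) = Wm (q : ℂ) L (x : ℂ) * Y) ↔
          ∃ a b : ℂ, Y = a • (1 : Matrix (Fin (L + 1)) (Fin (L + 1)) ℂ) + b • Jm L) ∧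
      ∀ (n : ℕ) (x : ℂ), Jm L * evP (q : ℂ) L C n x * Jm L = evP (q : ℂ) L C n x := by
  have h0 : (q:ℂ) ≠ 0 := by exact_mod_cast hq0.ne'
  have hp : ∀ n : ℕ, 0 < n → ((q:ℂ)^2) ^ n ≠ 1 := by
    intro n hn h
    have h1 : (q^2)^n = 1 := by exact_mod_cast h
    have h2 : (q^2)^n < 1 := pow_lt_one₀ (by positivity) (by nlinarith) (by omega)
    linarith
  exact ⟨fun Y => QX.comm_iff hq0 hq1 h0 hp L Y, fun n x => QX.JPJ h0 hp hC x L n⟩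

end
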